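/- A discrete group G is C*-simple if and only if G has no non-trivial amenable uniformly recurrent subgroup. -/

import Mathlib

noncomputable section
open scoped ENNReal ComplexOrder lp
open MeasureTheory
set_option maxHeartbeats 1000000
set_option synthInstance.maxHeartbeats 1000000

universe u

variable {G : Type u} [Group G]

theorem translat_mem (g : G) (f : ℓ²(G, ℂ)) : Memℓp (fun h => f (g⁻¹ * h)) 2 := by
  have hf : Summable fun i : G => ‖f i‖ ^ (2 : ℝ≥0∞).toReal :=
    (memℓp_gen_iff (by norm_num)).1 (lp.memℓp f)
  exact memℓp_gen ((Equiv.mulLeft g⁻¹).summable_iff.2 hf)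

/-- The left regular representation of `g ∈ G` as a linear isometric bijection of `ℓ²(G)`,
given by `(λ_g ξ)(h) = ξ(g⁻¹ h)`. -/
def lregE (g : G) : ℓ²(G, ℂ) ≃ₗᵢ[ℂ] ℓ²(G, ℂ) :=
{ toFun := fun f => ⟨fun h => f (g⁻¹ * h), translat_mem g f⟩
  invFun := fun f => ⟨fun h => f (g * h), by
    have := translat_mem g⁻¹ f; rw [inv_inv] at this; exact this⟩
  map_add' := by intro f₁ f₂; ext h; simp [lp.coeFn_add]; rfl
  map_smul' := by intro c f; ext h; simp [lp.coeFn_smul]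
  left_inv := by intro f; ext h; simp
  right_inv := by intro f; ext h; simp
  norm_map' := by
    intro f
    rw [lp.norm_eq_tsum_rpow (by norm_num) f, lp.norm_eq_tsum_rpow (by norm_num)]
    congr 1
    exact (Equiv.mulLeft g⁻¹).tsum_eq (fun h => ‖f h‖ ^ (2 : ℝ≥0∞).toReal) }

/-- The left regular representation `λ` as bounded operators on `ℓ²(G)`. -/
def lreg (g : G) : ℓ²(G, ℂ) →L[ℂ] ℓ²(G, ℂ) :=
  (lregE g).toContinuousLinearEquiv.toContinuousLinearMap

variable (G) in
/-- The reduced group C*-algebra `C*_λ(G)`: the norm-closed star subalgebra of the algebra of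
bounded operators on `ℓ²(G)` generated by the image of the left regular representation. -/
def redCstar : StarSubalgebra ℂ (ℓ²(G, ℂ) →L[ℂ] ℓ²(G, ℂ)) :=
  (StarAlgebra.adjoin ℂ (Set.range (lreg (G := G)))).topologicalClosure

variable (G) in
/-- `G` is C*-simple: `C*_λ(G)` has no closed two-sided ideals other than `{0}` and the
whole algebra. -/
def IsCstarSimple : Prop :=
  ∀ I : TwoSidedIdeal (redCstar G), IsClosed (I : Set (redCstar G)) → I = ⊥ ∨ I = ⊤

attribute [irreducible] redCstar lreg lregE

variable (G) in
/-- The Chabauty topology on the space of subgroups of `G`: the topology induced from the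
product topology on `{0,1}^G` by identifying a subgroup with its indicator function. -/
def chabauty : TopologicalSpace (Subgroup G) :=
  letI : ∀ p : Prop, Decidable p := Classical.propDecidable
  TopologicalSpace.induced (fun (H : Subgroup G) (g : G) => decide (g ∈ H))
    (inferInstance : TopologicalSpace (G → Bool))

attribute [instance] chabauty

/-- The conjugate subgroup `gHg⁻¹`. -/
def conjSub (g : G) (H : Subgroup G) : Subgroup G :=
  H.map (MulAut.conj g).toMonoidHom

variable (G) in
/-- A uniformly recurrent subgroup of `G`: a nonempty, Chabauty-closed, conjugation-invariant
and minimal (all orbits are dense) collection of subgroups of `G`. -/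
def IsURS (X : Set (Subgroup G)) : Prop :=
  X.Nonempty ∧ IsClosed X ∧ (∀ (g : G), ∀ H ∈ X, conjSub g H ∈ X) ∧
    ∀ H ∈ X, ∀ K ∈ X, K ∈ closure {L : Subgroup G | ∃ g : G, L = conjSub g H}

/-- Left translation of a bounded function on a group `H`. -/
def translInfty {H : Type*} [Group H] (h : H) (f : lp (fun _ : H => ℝ) ∞) :
    lp (fun _ : H => ℝ) ∞ :=
  ⟨fun k => f (h⁻¹ * k), by
    apply memℓp_infty
    have : (Set.range fun k => ‖f (h⁻¹ * k)‖) = Set.range fun k => ‖f k‖ :=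
      (Equiv.mulLeft h⁻¹).surjective.range_comp (fun k => ‖f k‖)
    rw [this]
    exact memℓp_infty_iff.1 (lp.memℓp f)⟩

/-- A group `H` is amenable: there exists a left-invariant mean on `ℓ∞(H)`, i.e. a unital
positive linear functional invariant under left translation. -/
def IsAmenable (H : Type*) [Group H] : Prop :=
  ∃ m : lp (fun _ : H => ℝ) ∞ →ₗ[ℝ] ℝ,
    m 1 = 1 ∧ (∀ f : lp (fun _ : H => ℝ) ∞, (∀ k, 0 ≤ f k) → 0 ≤ m f) ∧
      ∀ (h : H) (f : lp (fun _ : H => ℝ) ∞), m (translInfty h f) = m f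

/-!
The means on `ℓ∞(G)` form a compact convex semigroup under convolution, and the extreme points of
a minimal left ideal `L` play the role of the points of the Furstenberg boundary. Both properties
in the theorem are equivalent to topological freeness of the action on these extreme points
(`HasFreeTranslates`).

If the action is free and `ρ` is a state of `B(ℓ²(G))`, averaging `ρ` over `G` makes its
restriction to `ℓ∞(G)` an extreme point moved by any given finite set of elements, which forces
`ρ` to vanish on the corresponding `λ_s`; in the limit one obtains the canonical trace. A state
vanishing on a proper ideal of the reduced C*-algebra is thus averaged to the trace, so the ideal
is zero. A state with `λ_s ↦ 1_H(s)`, which exists for amenable `H`, is likewise averaged to the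
trace, so the conjugates of `H` accumulate at the trivial subgroup.

If the action is not free, the stabilizers of the extreme points are amenable and, by minimality,
the conjugates of one of them stay away from the trivial subgroup, which gives a non-trivial
amenable uniformly recurrent subgroup. For a simple reduced C*-algebra this is impossible: the
canonical trace is then also a state `λ_s ↦ 1_{s = 1}` in the quasi-regular representation on
`ℓ²(G/H)` for amenable `H`, and for the stabilizer `H` of a suitable extreme point `x` averaging
it against `x` gives a state concentrated on the fixed points of some `s ≠ 1` in `G/H`.
-/

section LpTranslation

variable {Y Z 𝕜 : Type*} [RCLike 𝕜] {p : ℝ≥0∞}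

lemma memℓp_comp_equiv (e : Y ≃ Z) {f : Z → 𝕜} (hf : Memℓp f p) : Memℓp (f ∘ e) p := by
  rcases p.trichotomy with rfl | rfl | hp
  · exact memℓp_zero ((memℓp_zero_iff.1 hf).preimage e.injective.injOn)
  · exact memℓp_infty ((memℓp_infty_iff.1 hf).mono (Set.range_comp_subset_range e (‖f ·‖)))
  · exact memℓp_gen ((e.summable_iff (f := fun z => ‖f z‖ ^ p.toReal)).2 (hf.summable hp))

variable (𝕜 p) in
/-- Reindexing of `ℓᵖ`-functions along a bijection of the index sets. -/
def lpReindex [Fact (1 ≤ p)] (e : Y ≃ Z) :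
    lp (fun _ : Y => 𝕜) p ≃ₗᵢ[𝕜] lp (fun _ : Z => 𝕜) p where
  toFun f := ⟨f ∘ e.symm, memℓp_comp_equiv e.symm (lp.memℓp f)⟩
  invFun f := ⟨f ∘ e, memℓp_comp_equiv e (lp.memℓp f)⟩
  map_add' _ _ := rfl
  map_smul' _ _ := rfl
  left_inv f := by ext y; exact congrArg f (e.symm_apply_apply y)
  right_inv f := by ext z; exact congrArg f (e.apply_symm_apply z)
  norm_map' f := by
    rcases p.trichotomy with rfl | rfl | hp
    · exact absurd (Fact.out : (1 : ℝ≥0∞) ≤ 0) (by simp)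
    · rw [lp.norm_eq_ciSup, lp.norm_eq_ciSup]
      exact e.symm.iSup_comp (g := fun y => ‖f y‖)
    · rw [lp.norm_eq_tsum_rpow hp, lp.norm_eq_tsum_rpow hp]
      exact congrArg (· ^ (1 / p.toReal)) (e.symm.tsum_eq fun y => ‖f y‖ ^ p.toReal)

variable (𝕜 p Y) in
/-- The action of `G` on `ℓᵖ(Y)` by left translation, for a `G`-set `Y`. -/
def lpTranslation [Fact (1 ≤ p)] [MulAction G Y] :
    G →* (lp (fun _ : Y => 𝕜) p ≃ₗᵢ[𝕜] lp (fun _ : Y => 𝕜) p) where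
  toFun g := lpReindex 𝕜 p (MulAction.toPerm g)
  map_one' := by ext f y; exact congrArg f (by simp [MulAction.toPerm])
  map_mul' g h := by ext f y; exact congrArg f (by simp [MulAction.toPerm, mul_smul])

lemma lpTranslation_apply [Fact (1 ≤ p)] [MulAction G Y] (g : G) (f : lp (fun _ : Y => 𝕜) p)
    (y : Y) : lpTranslation Y 𝕜 p g f y = f (g⁻¹ • y) := rfl

variable (𝕜 p) in
open Classical in
/-- The indicator function `δ_y` of a point, as an element of `ℓᵖ(Y)`. -/
def lpDelta (y : Y) : lp (fun _ : Y => 𝕜) p := lp.single p y 1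

lemma lpDelta_apply_self (y : Y) : lpDelta 𝕜 p y y = 1 := by
  classical exact lp.single_apply_self ..

lemma lpDelta_apply_of_ne {y z : Y} (h : z ≠ y) : lpDelta 𝕜 p y z = 0 := by
  classical exact lp.single_apply_ne _ _ _ h

lemma norm_lpDelta (hp : 0 < p) (y : Y) : ‖lpDelta 𝕜 p y‖ = 1 := by
  classical rw [lpDelta, lp.norm_single hp, norm_one]

lemma lpTranslation_lpDelta [Fact (1 ≤ p)] [MulAction G Y] (g : G) (y : Y) :
    lpTranslation Y 𝕜 p g (lpDelta 𝕜 p y) = lpDelta 𝕜 p (g • y) := by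
  ext z
  rw [lpTranslation_apply]
  by_cases hz : z = g • y
  · rw [hz, inv_smul_smul, lpDelta_apply_self, lpDelta_apply_self]
  · rw [lpDelta_apply_of_ne hz, lpDelta_apply_of_ne (mt inv_smul_eq_iff.1 hz)]

end LpTranslation

/-- The Banach algebra `ℓ∞(Y)` of bounded real functions on a set. -/
abbrev LInf (Y : Type*) := lp (fun _ : Y => ℝ) ∞

namespace LInf

variable {Y Z : Type*}

lemma abs_apply_le_norm (f : LInf Y) (y : Y) : |f y| ≤ ‖f‖ :=
  lp.norm_apply_le_norm ENNReal.top_ne_zero f y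

lemma norm_smul_one_sub_apply (f : LInf Y) (y : Y) :
    (‖f‖ • (1 : LInf Y) - f) y = ‖f‖ - f y := by
  rw [lp.coeFn_sub, lp.coeFn_smul, lp.infty_coeFn_one, Pi.sub_apply, Pi.smul_apply,
    Pi.one_apply, smul_eq_mul, mul_one]

/-- The element of `ℓ∞(Y)` given by a function bounded by `C`. -/
def ofBounded (f : Y → ℝ) (C : ℝ) (hf : ∀ y, |f y| ≤ C) : LInf Y :=
  ⟨f, memℓp_infty ⟨C, Set.forall_mem_range.2 hf⟩⟩

/-- The indicator function `1_A`, as an element of `ℓ∞(Y)`. -/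
def indicator (A : Set Y) : LInf Y :=
  ofBounded (A.indicator 1) 1 fun y => by by_cases hy : y ∈ A <;> simp [hy]

lemma indicator_apply_of_mem {A : Set Y} {y : Y} (hy : y ∈ A) : indicator A y = 1 :=
  Set.indicator_of_mem hy 1

lemma indicator_apply_of_notMem {A : Set Y} {y : Y} (hy : y ∉ A) : indicator A y = 0 :=
  Set.indicator_of_notMem hy 1

lemma indicator_apply_nonneg (A : Set Y) (y : Y) : 0 ≤ indicator A y :=
  Set.indicator_nonneg (fun _ _ => zero_le_one) y

lemma indicator_add_indicator_compl (A : Set Y) : indicator A + indicator Aᶜ = 1 := by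
  ext y
  exact congrFun (Set.indicator_self_add_compl A (1 : Y → ℝ)) y

/-- Composition of bounded functions with a map of the underlying sets. -/
def comap (σ : Y → Z) : LInf Z →L[ℝ] LInf Y :=
  LinearMap.mkContinuous
    { toFun := fun f => ofBounded (f ∘ σ) ‖f‖ fun y => abs_apply_le_norm f (σ y)
      map_add' := fun _ _ => rfl
      map_smul' := fun _ _ => rfl } 1 fun f => by
    rw [one_mul]
    exact lp.norm_le_of_forall_le (norm_nonneg f) fun y => abs_apply_le_norm f (σ y)

lemma comap_apply (σ : Y → Z) (f : LInf Z) (y : Y) : comap σ f y = f (σ y) := rfl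

end LInf

section States

variable {V W : Type*} [NormedAddCommGroup V] [NormedSpace ℝ V]
  [NormedAddCommGroup W] [NormedSpace ℝ W] {e : V} {ψ : WeakDual ℝ V}

/-- The states of a normed space with order unit `e`: the functionals of norm at most one mapping
`e` to `1`. On a real or complex C*-algebra with unit `e` these are (the real parts of) the usual
states. -/
def stateSpace (e : V) : Set (WeakDual ℝ V) := {ψ | ψ e = 1 ∧ ∀ v, ψ v ≤ ‖v‖}

lemma abs_apply_le_of_mem_stateSpace (hψ : ψ ∈ stateSpace e) (v : V) : |ψ v| ≤ ‖v‖ :=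
  abs_le.2 ⟨by simpa [neg_le] using hψ.2 (-v), hψ.2 v⟩

lemma isClosed_stateSpace (e : V) : IsClosed (stateSpace e) :=
  (isClosed_eq (WeakDual.eval_continuous e) continuous_const).and <| by
    simp only [Set.ofPred_forall]
    exact isClosed_iInter fun v => isClosed_le (WeakDual.eval_continuous v) continuous_const

lemma isCompact_stateSpace (e : V) : IsCompact (stateSpace e) :=
  (WeakDual.isCompact_closedBall (𝕜 := ℝ) (E := V) 0 1).of_isClosed_subset
    (isClosed_stateSpace e) fun ψ hψ => by
      rw [Set.mem_preimage, mem_closedBall_zero_iff]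
      exact ContinuousLinearMap.opNorm_le_bound _ zero_le_one fun v => by
        rw [one_mul]; exact abs_apply_le_of_mem_stateSpace hψ v

lemma convex_stateSpace (e : V) : Convex ℝ (stateSpace e) := by
  rintro φ hφ ψ hψ a b ha hb hab
  refine ⟨?_, fun v => ?_⟩
  · change a * φ e + b * ψ e = 1
    rw [hφ.1, hψ.1, mul_one, mul_one, hab]
  · calc a * φ v + b * ψ v ≤ a * ‖v‖ + b * ‖v‖ := by gcongr; exacts [hφ.2 v, hψ.2 v]
      _ = ‖v‖ := by rw [← add_mul, hab, one_mul]

/-- The transpose of a bounded operator, acting on the weak-* duals. -/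
def transpose (T : V →L[ℝ] W) : WeakDual ℝ W →L[ℝ] WeakDual ℝ V where
  toFun ψ := StrongDual.toWeakDual ((WeakDual.toStrongDual ψ).comp T)
  map_add' _ _ := rfl
  map_smul' _ _ := rfl
  cont := WeakDual.continuous_of_continuous_eval fun v => WeakDual.eval_continuous (T v)

lemma transpose_apply (T : V →L[ℝ] W) (ψ : WeakDual ℝ W) (v : V) : transpose T ψ v = ψ (T v) :=
  rfl

lemma transpose_mem_stateSpace {T : V →L[ℝ] W} (hT : ∀ v, ‖T v‖ ≤ ‖v‖) {ψ : WeakDual ℝ W}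
    (hψ : ψ ∈ stateSpace (T e)) : transpose T ψ ∈ stateSpace e :=
  ⟨hψ.1, fun v => (hψ.2 (T v)).trans (hT v)⟩

end States

section Means

variable {Y Z : Type*} {ν : WeakDual ℝ (LInf Y)}

/-- The means on a set `Y`, that is, the finitely additive probability measures. -/
abbrev means (Y : Type*) : Set (WeakDual ℝ (LInf Y)) := stateSpace (1 : LInf Y)

lemma apply_nonneg_of_mem_means (hν : ν ∈ means Y) {f : LInf Y} (hf : ∀ y, 0 ≤ f y) :
    0 ≤ ν f := by
  have hnorm : ‖‖f‖ • (1 : LInf Y) - f‖ ≤ ‖f‖ :=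
    lp.norm_le_of_forall_le (norm_nonneg f) fun y => by
      rw [LInf.norm_smul_one_sub_apply, Real.norm_of_nonneg
        (sub_nonneg.2 (abs_le.1 (LInf.abs_apply_le_norm f y)).2)]
      exact sub_le_self _ (hf y)
  have hle := (hν.2 _).trans hnorm
  rw [map_sub, map_smul, hν.1, smul_eq_mul, mul_one] at hle
  linarith

lemma apply_mono_of_mem_means (hν : ν ∈ means Y) {f g : LInf Y} (hfg : ∀ y, f y ≤ g y) :
    ν f ≤ ν g := by
  rw [← sub_nonneg, ← map_sub]
  exact apply_nonneg_of_mem_means hν fun y => sub_nonneg.2 (hfg y)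

lemma exists_mem_means_of_nonneg (φ : LInf Y →ₗ[ℝ] ℝ) (hone : φ 1 = 1)
    (hnonneg : ∀ f : LInf Y, (∀ y, 0 ≤ f y) → 0 ≤ φ f) : ∃ ν ∈ means Y, ∀ f, ν f = φ f := by
  have hle (f : LInf Y) : φ f ≤ ‖f‖ := by
    have hsub := hnonneg (‖f‖ • 1 - f) fun y => by
      rw [LInf.norm_smul_one_sub_apply]
      exact sub_nonneg.2 (abs_le.1 (LInf.abs_apply_le_norm f y)).2
    rw [map_sub, map_smul, hone, smul_eq_mul, mul_one] at hsub
    linarith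
  have hcont (f : LInf Y) : ‖φ f‖ ≤ 1 * ‖f‖ := by
    rw [one_mul]
    exact abs_le.2 ⟨by simpa [neg_le] using hle (-f), hle f⟩
  exact ⟨StrongDual.toWeakDual (φ.mkContinuous 1 hcont), ⟨hone, hle⟩, fun _ => rfl⟩

/-- The point evaluation `f ↦ f y`, as a functional on `ℓ∞(Y)`. -/
def dirac (y : Y) : WeakDual ℝ (LInf Y) :=
  StrongDual.toWeakDual (lp.evalCLM ℝ (fun _ : Y => ℝ) ∞ y)

lemma dirac_mem_means (y : Y) : dirac y ∈ means Y :=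
  ⟨rfl, fun f => (le_abs_self _).trans (LInf.abs_apply_le_norm f y)⟩

lemma transpose_comap_mem_means (σ : Y → Z) (hν : ν ∈ means Y) :
    transpose (LInf.comap σ) ν ∈ means Z :=
  transpose_mem_stateSpace (fun f => lp.norm_le_of_forall_le (norm_nonneg f) fun y =>
    LInf.abs_apply_le_norm f (σ y)) hν

end Means

section Convolution

variable {V W : Type*} [NormedAddCommGroup V] [NormedSpace ℝ V]
  [NormedAddCommGroup W] [NormedSpace ℝ W]

/-- The action of `G` on `ℓ∞(Y)` by left translation, for a `G`-set `Y`. -/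
abbrev LInf.translation (G Y : Type*) [Group G] [MulAction G Y] :
    G →* (LInf Y ≃ₗᵢ[ℝ] LInf Y) :=
  lpTranslation Y ℝ ∞

/-- The action of `G` on functionals dual to an isometric action on the space. -/
def dualAction (α : G →* (V ≃ₗᵢ[ℝ] V)) : G →* (WeakDual ℝ V →L[ℝ] WeakDual ℝ V) where
  toFun g := transpose (α g⁻¹).toContinuousLinearEquiv.toContinuousLinearMap
  map_one' := by
    refine ContinuousLinearMap.ext fun ψ => DFunLike.ext _ _ fun v => ?_
    change ψ (α 1⁻¹ v) = ψ v
    rw [inv_one, map_one, LinearIsometryEquiv.coe_one, id]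
  map_mul' g h := by
    refine ContinuousLinearMap.ext fun ψ => DFunLike.ext _ _ fun v => ?_
    change ψ (α (g * h)⁻¹ v) = ψ (α h⁻¹ (α g⁻¹ v))
    rw [mul_inv_rev, map_mul, LinearIsometryEquiv.coe_mul, Function.comp_apply]

/-- The Poisson map `v ↦ (g ↦ ψ (g⁻¹ v))` of a functional `ψ`. -/
def poisson (α : G →* (V ≃ₗᵢ[ℝ] V)) (ψ : WeakDual ℝ V) : V →L[ℝ] LInf G :=
  have bound (v : V) (g : G) : |ψ (α g⁻¹ v)| ≤ ‖WeakDual.toStrongDual ψ‖ * ‖v‖ := by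
    simpa using (WeakDual.toStrongDual ψ).le_opNorm (α g⁻¹ v)
  LinearMap.mkContinuous
    { toFun := fun v => LInf.ofBounded (fun g => ψ (α g⁻¹ v)) _ (bound v)
      map_add' := fun v w => by ext g; exact (congrArg ψ (map_add _ v w)).trans (map_add ψ _ _)
      map_smul' := fun c v => by
        ext g; exact (congrArg ψ (map_smul _ c v)).trans (map_smul ψ c _) }
    ‖WeakDual.toStrongDual ψ‖ fun v => lp.norm_le_of_forall_le (by positivity) (bound v)

/-- The convolution `m * ψ` of a functional `m` on `ℓ∞(G)` with a functional `ψ` on a space on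
which `G` acts; it is linear and weak-* continuous as a function of `m`. -/
def convolve (α : G →* (V ≃ₗᵢ[ℝ] V)) (ψ : WeakDual ℝ V) :
    WeakDual ℝ (LInf G) →L[ℝ] WeakDual ℝ V :=
  transpose (poisson α ψ)

notation:70 m:70 "⋆" x:71 => convolve (LInf.translation _ _) x m

notation:75 g:76 "⊳" x:75 => dualAction (LInf.translation _ _) g x

/-- The stabilizer of a functional under the dual action. -/
def stabilizer (α : G →* (V ≃ₗᵢ[ℝ] V)) (ψ : WeakDual ℝ V) : Subgroup G :=
  (MulAction.stabilizer (WeakDual ℝ V →L[ℝ] WeakDual ℝ V)ˣ ψ).comap (dualAction α).toHomUnits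

variable {α : G →* (V ≃ₗᵢ[ℝ] V)} {ψ : WeakDual ℝ V}

lemma mem_stabilizer_iff {g : G} : g ∈ stabilizer α ψ ↔ dualAction α g ψ = ψ := Iff.rfl

lemma dualAction_apply (g : G) (v : V) : dualAction α g ψ v = ψ (α g⁻¹ v) := rfl

lemma dualAction_mul (g h : G) (ψ : WeakDual ℝ V) :
    dualAction α (g * h) ψ = dualAction α g (dualAction α h ψ) := by
  rw [map_mul]; rfl

lemma dualAction_inv_dualAction (g : G) (ψ : WeakDual ℝ V) :
    dualAction α g⁻¹ (dualAction α g ψ) = ψ := by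
  rw [← dualAction_mul, inv_mul_cancel, map_one]; rfl

lemma poisson_apply (v : V) (g : G) : poisson α ψ v g = dualAction α g ψ v := rfl

lemma convolve_apply (m : WeakDual ℝ (LInf G)) (v : V) :
    convolve α ψ m v = m (poisson α ψ v) := rfl

lemma convolve_dirac (g : G) : convolve α ψ (dirac g) = dualAction α g ψ := rfl

lemma convolve_convolve (m n : WeakDual ℝ (LInf G)) :
    convolve α (convolve α ψ m) n = convolve α ψ (n ⋆ m) := by
  refine DFunLike.ext _ _ fun v => congrArg n (lp.ext <| funext fun g => congrArg m ?_)
  ext h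
  change ψ (α h⁻¹ (α g⁻¹ v)) = ψ (α (g⁻¹⁻¹ * h)⁻¹ v)
  rw [inv_inv, mul_inv_rev, map_mul, LinearIsometryEquiv.coe_mul, Function.comp_apply]

lemma dualAction_convolve (g : G) (m : WeakDual ℝ (LInf G)) :
    dualAction α g (convolve α ψ m) = convolve α ψ (g ⊳ m) := by
  rw [← convolve_dirac, convolve_convolve, convolve_dirac]

lemma convolve_transpose {β : G →* (W ≃ₗᵢ[ℝ] W)} {T : V →L[ℝ] W}
    (hT : ∀ g v, T (α g v) = β g (T v)) (ψ : WeakDual ℝ W) (m : WeakDual ℝ (LInf G)) :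
    convolve α (transpose T ψ) m = transpose T (convolve β ψ m) :=
  DFunLike.ext _ _ fun v => congrArg m <| lp.ext <| funext fun g => congrArg ψ (hT g⁻¹ v)

variable {e : V}

lemma dualAction_mem_stateSpace (he : ∀ g, α g e = e) (hψ : ψ ∈ stateSpace e) (g : G) :
    dualAction α g ψ ∈ stateSpace e :=
  transpose_mem_stateSpace (fun v => ((α g⁻¹).norm_map v).le) <| by
    rwa [← he g⁻¹] at hψ

lemma norm_poisson_le (hψ : ψ ∈ stateSpace e) (v : V) : ‖poisson α ψ v‖ ≤ ‖v‖ :=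
  lp.norm_le_of_forall_le (norm_nonneg v) fun g =>
    (abs_apply_le_of_mem_stateSpace hψ (α g⁻¹ v)).trans_eq ((α g⁻¹).norm_map v)

lemma convolve_mem_stateSpace (he : ∀ g, α g e = e) (hψ : ψ ∈ stateSpace e)
    {m : WeakDual ℝ (LInf G)} (hm : m ∈ means G) : convolve α ψ m ∈ stateSpace e :=
  transpose_mem_stateSpace (norm_poisson_le hψ) <| by
    have hone : poisson α ψ e = 1 := by
      ext g
      exact (congrArg ψ (he g⁻¹)).trans hψ.1
    rwa [hone]

lemma translation_one {Y : Type*} [MulAction G Y] (g : G) : LInf.translation G Y g 1 = 1 := rfl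

lemma convolve_mem_means {m x : WeakDual ℝ (LInf G)} (hm : m ∈ means G) (hx : x ∈ means G) :
    m ⋆ x ∈ means G :=
  convolve_mem_stateSpace translation_one hx hm

end Convolution

section Minimality

lemma exists_minimal_invariant {X ι : Type*} [TopologicalSpace X] {T : ι → X → X} {C : Set X}
    (hcompact : IsCompact C) (hclosed : IsClosed C) (hne : C.Nonempty)
    (hinv : ∀ i, ∀ x ∈ C, T i x ∈ C) :
    ∃ M ⊆ C, IsClosed M ∧ M.Nonempty ∧ (∀ i, ∀ x ∈ M, T i x ∈ M) ∧
      ∀ N ⊆ M, IsClosed N → N.Nonempty → (∀ i, ∀ x ∈ N, T i x ∈ N) → N = M := by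
  let S : Set (Set X) := {M | M ⊆ C ∧ IsClosed M ∧ M.Nonempty ∧ ∀ i, ∀ x ∈ M, T i x ∈ M}
  have hchain : ∀ c ⊆ S, IsChain (· ⊆ ·) c → c.Nonempty → ∃ lb ∈ S, ∀ s ∈ c, lb ⊆ s := by
    intro c hcS hc hcne
    have : Nonempty c := hcne.to_subtype
    refine ⟨⋂₀ c, ⟨?_, isClosed_sInter fun s hs => (hcS hs).2.1, ?_, ?_⟩,
      fun s => Set.sInter_subset_of_mem⟩
    · obtain ⟨s, hs⟩ := hcne
      exact (Set.sInter_subset_of_mem hs).trans (hcS hs).1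
    · exact IsCompact.nonempty_sInter_of_directed_nonempty_isCompact_isClosed
        (fun a ha b hb => (hc.total ha hb).elim (fun h => ⟨a, ha, subset_rfl, h⟩)
          fun h => ⟨b, hb, h, subset_rfl⟩) (fun s hs => (hcS hs).2.2.1)
        (fun s hs => hcompact.of_isClosed_subset (hcS hs).2.1 (hcS hs).1)
        fun s hs => (hcS hs).2.1
    · exact fun i x hx s hs => (hcS hs).2.2.2 i x (hx s hs)
  obtain ⟨M, hMC, hM⟩ := zorn_superset_nonempty S hchain C ⟨subset_rfl, hclosed, hne, hinv⟩
  exact ⟨M, hMC, hM.prop.2.1, hM.prop.2.2.1, hM.prop.2.2.2, fun N hN hNcl hNne hNinv =>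
    hM.eq_of_subset ⟨hN.trans hMC, hNcl, hNne, hNinv⟩ hN⟩

open scoped Pointwise in
/-- The **Markov–Kakutani theorem** for a single operator. -/
theorem exists_fixedPoint_of_isCompact_convex {E : Type*} [AddCommGroup E] [Module ℝ E]
    [TopologicalSpace E] [IsTopologicalAddGroup E] [ContinuousSMul ℝ E] [T2Space E]
    {K : Set E} (hK : IsCompact K) (hconv : Convex ℝ K) (hne : K.Nonempty)
    (T : E →L[ℝ] E) (hT : Set.MapsTo T K K) : ∃ z ∈ K, T z = z := by
  obtain ⟨x, hx⟩ := hne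
  have hiter (n : ℕ) : T^[n] x ∈ K := hT.iterate n hx
  let z (n : ℕ) : E := birkhoffAverage ℝ T id (n + 1) x
  have hz (n : ℕ) : z n ∈ K := by
    simp only [z, birkhoffAverage, birkhoffSum, Finset.smul_sum]
    refine hconv.sum_mem (fun i _ => by positivity) ?_ fun i _ => hiter i
    rw [Finset.sum_const, Finset.card_range, nsmul_eq_mul, mul_inv_cancel₀ (by positivity)]
  have hdiff (n : ℕ) : T (z n) - z n = ((n + 1 : ℕ) : ℝ)⁻¹ • (T^[n + 1] x - x) := by
    have hTz : T (z n) = birkhoffAverage ℝ T id (n + 1) (T x) := by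
      rw [map_birkhoffAverage ℝ ℝ T]
      simp only [birkhoffAverage, birkhoffSum, Function.comp_apply, id,
        ← Function.iterate_succ_apply, Function.iterate_succ_apply']
    rw [hTz, birkhoffAverage_apply_sub_birkhoffAverage]
    rfl
  obtain ⟨w, hw, hlim⟩ := hK.ultrafilter_le_nhds ((Filter.hyperfilter ℕ).map z)
    (Filter.le_principal_iff.2 (Filter.mem_map.2 (Filter.univ_mem' hz)))
  have hzw : Filter.Tendsto z (Filter.hyperfilter ℕ) (nhds w) := hlim
  have hbdd : Bornology.IsVonNBounded ℝ (K - K) :=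
    letI := IsTopologicalAddGroup.rightUniformSpace E
    haveI := isUniformAddGroup_of_addCommGroup (G := E)
    (hK.totallyBounded.isVonNBounded ℝ).sub (hK.totallyBounded.isVonNBounded ℝ)
  have hzero : Filter.Tendsto (fun n => T (z n) - z n) (Filter.hyperfilter ℕ) (nhds 0) := by
    simp only [hdiff]
    refine (hbdd.smul_tendsto_zero (Filter.Eventually.of_forall fun n => ?_)
      (tendsto_inv_atTop_nhds_zero_nat.comp (Filter.tendsto_add_atTop_nat 1))).mono_left
        Nat.hyperfilter_le_atTop
    exact Set.sub_mem_sub (hiter (n + 1)) hx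
  exact ⟨w, hw, sub_eq_zero.1 <| tendsto_nhds_unique
    (((T.continuous.tendsto w).comp hzw).sub hzw) hzero⟩

end Minimality

section MinimalLeftIdeals

/-- A minimal closed left ideal of the convolution semigroup of means on `G`. -/
structure IsMinimalLeftIdeal (L : Set (WeakDual ℝ (LInf G))) : Prop where
  subset_means : L ⊆ means G
  isClosed : IsClosed L
  nonempty : L.Nonempty
  convolve_mem : ∀ m ∈ means G, ∀ x ∈ L, m ⋆ x ∈ L
  eq_of_subset : ∀ N ⊆ L, IsClosed N → N.Nonempty → (∀ m ∈ means G, ∀ x ∈ N, m ⋆ x ∈ N) → N = L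

lemma isCompact_image_convolve (x : WeakDual ℝ (LInf G)) : IsCompact ((· ⋆ x) '' means G) :=
  (isCompact_stateSpace 1).image (ContinuousLinearMap.continuous _)

lemma nonempty_image_convolve (x : WeakDual ℝ (LInf G)) : ((· ⋆ x) '' means G).Nonempty :=
  ⟨_, dirac 1, dirac_mem_means 1, rfl⟩

lemma convolve_mem_image_convolve {m x y : WeakDual ℝ (LInf G)} (hm : m ∈ means G)
    (hy : y ∈ (· ⋆ x) '' means G) : m ⋆ y ∈ (· ⋆ x) '' means G := by
  obtain ⟨n, hn, rfl⟩ := hy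
  exact ⟨m ⋆ n, convolve_mem_means hm hn, (convolve_convolve n m).symm⟩

theorem exists_isMinimalLeftIdeal_subset_image {x : WeakDual ℝ (LInf G)} (hx : x ∈ means G) :
    ∃ L, IsMinimalLeftIdeal L ∧ L ⊆ (· ⋆ x) '' means G := by
  have hcompact := isCompact_image_convolve x
  obtain ⟨L, hLx, hcl, hne, hinv, hmin⟩ := exists_minimal_invariant
    (T := fun (m : means G) y => m.1 ⋆ y) hcompact hcompact.isClosed (nonempty_image_convolve x)
    fun m _ => convolve_mem_image_convolve m.2
  have hmeans : (· ⋆ x) '' means G ⊆ means G :=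
    Set.image_subset_iff.2 fun m hm => convolve_mem_means hm hx
  exact ⟨L, ⟨hLx.trans hmeans, hcl, hne, fun m hm => hinv ⟨m, hm⟩,
    fun N hN hNcl hNne hNinv => hmin N hN hNcl hNne fun m => hNinv m.1 m.2⟩, hLx⟩

namespace IsMinimalLeftIdeal

variable {L : Set (WeakDual ℝ (LInf G))} {x y : WeakDual ℝ (LInf G)}

lemma isCompact (hL : IsMinimalLeftIdeal L) : IsCompact L :=
  (isCompact_stateSpace 1).of_isClosed_subset hL.isClosed hL.subset_means

lemma image_convolve_eq (hL : IsMinimalLeftIdeal L) (hx : x ∈ L) : (· ⋆ x) '' means G = L :=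
  hL.eq_of_subset _ (Set.image_subset_iff.2 fun m hm => hL.convolve_mem m hm x hx)
    (isCompact_image_convolve x).isClosed (nonempty_image_convolve x)
    fun _ hm _ => convolve_mem_image_convolve hm

lemma convex (hL : IsMinimalLeftIdeal L) : Convex ℝ L := by
  obtain ⟨x, hx⟩ := hL.nonempty
  rw [← hL.image_convolve_eq hx]
  exact (convex_stateSpace 1).linear_image (convolve (LInf.translation G G) x).toLinearMap

/- Right convolution by `y` fixes some `z ∈ L` by Markov–Kakutani, and `L` is generated by `z`. -/
theorem convolve_eq_left (hL : IsMinimalLeftIdeal L) (hx : x ∈ L) (hy : y ∈ L) : x ⋆ y = x := by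
  obtain ⟨z, hz, hzy⟩ := exists_fixedPoint_of_isCompact_convex hL.isCompact hL.convex hL.nonempty
    (convolve (LInf.translation G G) y) fun m hm => hL.convolve_mem m (hL.subset_means hm) y hy
  obtain ⟨m, -, rfl⟩ := (hL.image_convolve_eq hz).symm ▸ hx
  rw [← convolve_convolve, hzy]

lemma translate_mem (hL : IsMinimalLeftIdeal L) (hx : x ∈ L) (g : G) : g ⊳ x ∈ L :=
  hL.convolve_mem _ (dirac_mem_means g) x hx

lemma translate_mem_extremePoints (hL : IsMinimalLeftIdeal L) (hx : x ∈ L.extremePoints ℝ)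
    (g : G) : g ⊳ x ∈ L.extremePoints ℝ := by
  rw [mem_extremePoints_iff_left] at hx ⊢
  refine ⟨hL.translate_mem hx.1 g, fun y hy z hz hyz => ?_⟩
  have hseg : x ∈ openSegment ℝ (g⁻¹ ⊳ y) (g⁻¹ ⊳ z) := by
    obtain ⟨a, b, ha, hb, hab, h⟩ := hyz
    exact ⟨a, b, ha, hb, hab, by
      rw [← dualAction_inv_dualAction (α := LInf.translation G G) g x, ← h, map_add, map_smul,
        map_smul]⟩
  rw [← hx.2 _ (hL.translate_mem hy _) _ (hL.translate_mem hz _) hseg]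
  nth_rw 1 [← inv_inv g]
  rw [dualAction_inv_dualAction]

end IsMinimalLeftIdeal

lemma extremePoints_nonempty_of_isCompact {V : Type*} [NormedAddCommGroup V] [NormedSpace ℝ V]
    {K : Set (WeakDual ℝ V)} (hK : IsCompact K) (hne : K.Nonempty) :
    (K.extremePoints ℝ).Nonempty :=
  have : LocallyConvexSpace ℝ (WeakDual ℝ V) :=
    inferInstanceAs (LocallyConvexSpace ℝ (WeakBilin (topDualPairing ℝ V)))
  hK.extremePoints_nonempty hne

end MinimalLeftIdeals

section ExtremePoints

variable {Y : Type*} {ν : WeakDual ℝ (LInf Y)}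

lemma LInf.indicator_mul_apply_of_mem {A : Set Y} (f : LInf Y) {y : Y} (hy : y ∈ A) :
    (indicator A * f) y = f y := by
  rw [lp.infty_coeFn_mul, Pi.mul_apply, indicator_apply_of_mem hy, one_mul]

lemma LInf.indicator_mul_apply_of_notMem {A : Set Y} (f : LInf Y) {y : Y} (hy : y ∉ A) :
    (indicator A * f) y = 0 := by
  rw [lp.infty_coeFn_mul, Pi.mul_apply, indicator_apply_of_notMem hy, zero_mul]

lemma apply_indicator_mul_add_compl (ν : WeakDual ℝ (LInf Y)) (A : Set Y) (f : LInf Y) :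
    ν (LInf.indicator A * f) + ν (LInf.indicator Aᶜ * f) = ν f := by
  rw [← map_add, ← add_mul, LInf.indicator_add_indicator_compl, one_mul]

lemma apply_indicator_add_compl (hν : ν ∈ means Y) (A : Set Y) :
    ν (LInf.indicator A) + ν (LInf.indicator Aᶜ) = 1 := by
  rw [← map_add, LInf.indicator_add_indicator_compl, hν.1]

lemma apply_indicator_nonneg (hν : ν ∈ means Y) (A : Set Y) : 0 ≤ ν (LInf.indicator A) :=
  apply_nonneg_of_mem_means hν (LInf.indicator_apply_nonneg A)

lemma apply_indicator_eq_zero_of_subset_biUnion {ι : Type*} (hν : ν ∈ means Y) {T : Finset ι}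
    {A : ι → Set Y} {B : Set Y} (hB : B ⊆ ⋃ t ∈ T, A t)
    (hA : ∀ t ∈ T, ν (LInf.indicator (A t)) = 0) : ν (LInf.indicator B) = 0 := by
  refine le_antisymm ?_ (apply_indicator_nonneg hν B)
  calc ν (LInf.indicator B) ≤ ν (∑ t ∈ T, LInf.indicator (A t)) := by
        refine apply_mono_of_mem_means hν fun y => ?_
        rw [lp.coeFn_sum, Finset.sum_apply]
        by_cases hy : y ∈ B
        · obtain ⟨t, ht, hyt⟩ := Set.mem_iUnion₂.1 (hB hy)
          rw [LInf.indicator_apply_of_mem hy, ← LInf.indicator_apply_of_mem hyt]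
          exact Finset.single_le_sum (f := fun t => LInf.indicator (A t) y)
            (fun t _ => LInf.indicator_apply_nonneg _ _) ht
        · rw [LInf.indicator_apply_of_notMem hy]
          exact Finset.sum_nonneg fun t _ => LInf.indicator_apply_nonneg _ _
    _ = 0 := by rw [map_sum, Finset.sum_eq_zero hA]

lemma mul_apply_indicator_le {A : Set Y} {f : LInf Y} {c : ℝ} (hν : ν ∈ means Y)
    (hf : ∀ y ∈ A, c ≤ f y) : c * ν (LInf.indicator A) ≤ ν (LInf.indicator A * f) := by
  rw [← smul_eq_mul, ← map_smul]
  refine apply_mono_of_mem_means hν fun y => ?_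
  rw [lp.coeFn_smul, Pi.smul_apply, smul_eq_mul]
  by_cases hy : y ∈ A
  · rw [LInf.indicator_mul_apply_of_mem f hy, LInf.indicator_apply_of_mem hy, mul_one]
    exact hf y hy
  · rw [LInf.indicator_mul_apply_of_notMem f hy, LInf.indicator_apply_of_notMem hy, mul_zero]

lemma apply_indicator_mul_eq_zero {A : Set Y} (hν : ν ∈ means Y)
    (hA : ν (LInf.indicator A) = 0) (f : LInf Y) : ν (LInf.indicator A * f) = 0 := by
  have hnonneg (f : LInf Y) : 0 ≤ ν (LInf.indicator A * f) := by
    have hle := mul_apply_indicator_le hν (A := A) fun y _ =>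
      (abs_le.1 (LInf.abs_apply_le_norm f y)).1
    rwa [hA, mul_zero] at hle
  refine le_antisymm ?_ (hnonneg f)
  have hneg := hnonneg (-f)
  have hmul : LInf.indicator A * -f = -(LInf.indicator A * f) := by
    ext y
    exact mul_neg _ _
  rwa [hmul, map_neg, neg_nonneg] at hneg

lemma exists_mem_means_restrict {A : Set Y} (hν : ν ∈ means Y) (hA : ν (LInf.indicator A) ≠ 0) :
    ∃ κ ∈ means Y, ∀ f, ν (LInf.indicator A) * κ f = ν (LInf.indicator A * f) := by
  obtain ⟨κ, hκ, hκ_apply⟩ := exists_mem_means_of_nonneg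
    ((ν (LInf.indicator A))⁻¹ • (WeakDual.toStrongDual ν).toLinearMap ∘ₗ
      LinearMap.mulLeft ℝ (LInf.indicator A))
    (by
      change (ν (LInf.indicator A))⁻¹ * ν (LInf.indicator A * 1) = 1
      rw [mul_one, inv_mul_cancel₀ hA])
    fun f hf => by
      refine mul_nonneg (inv_nonneg.2 (apply_indicator_nonneg hν A)) ?_
      simpa using mul_apply_indicator_le hν (A := A) fun y _ => hf y
  refine ⟨κ, hκ, fun f => ?_⟩
  rw [hκ_apply]
  exact mul_inv_cancel_left₀ hA _

variable {V : Type*} [NormedAddCommGroup V] [NormedSpace ℝ V] {L : Set (WeakDual ℝ V)}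
  {Θ : V →L[ℝ] LInf Y}

/- Restricting `ν` to `A` and to `Aᶜ` writes `Θᵀ ν` as a convex combination of points of `L`. -/
theorem apply_indicator_mul_of_mem_extremePoints (hΘ : ∀ κ ∈ means Y, transpose Θ κ ∈ L)
    (hν : ν ∈ means Y) (hext : transpose Θ ν ∈ L.extremePoints ℝ) (A : Set Y) (v : V) :
    ν (LInf.indicator A * Θ v) = ν (LInf.indicator A) * ν (Θ v) := by
  have hsum := apply_indicator_add_compl hν A
  by_cases hA : ν (LInf.indicator A) = 0
  · rw [apply_indicator_mul_eq_zero hν hA, hA, zero_mul]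
  by_cases hAc : ν (LInf.indicator Aᶜ) = 0
  · have hsplit := apply_indicator_mul_add_compl ν A (Θ v)
    rw [apply_indicator_mul_eq_zero hν hAc, add_zero] at hsplit
    rw [hsplit, ← add_zero (ν (LInf.indicator A)), ← hAc, hsum, one_mul]
  obtain ⟨κ, hκ, hκ_apply⟩ := exists_mem_means_restrict hν hA
  obtain ⟨κ', hκ', hκ'_apply⟩ := exists_mem_means_restrict hν hAc
  have hseg : transpose Θ ν ∈ openSegment ℝ (transpose Θ κ) (transpose Θ κ') := by
    refine ⟨_, _, (apply_indicator_nonneg hν A).lt_of_ne' hA,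
      (apply_indicator_nonneg hν Aᶜ).lt_of_ne' hAc, hsum, DFunLike.ext _ _ fun w => ?_⟩
    change ν (LInf.indicator A) * κ (Θ w) + ν (LInf.indicator Aᶜ) * κ' (Θ w) = ν (Θ w)
    rw [hκ_apply, hκ'_apply, apply_indicator_mul_add_compl]
  have heq := (mem_extremePoints_iff_left.1 hext).2 _ (hΘ κ hκ) _ (hΘ κ' hκ') hseg
  rw [← hκ_apply]
  exact congrArg (ν (LInf.indicator A) * ·) (DFunLike.congr_fun heq v)

theorem apply_indicator_eq_zero_of_lt (hΘ : ∀ κ ∈ means Y, transpose Θ κ ∈ L)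
    (hν : ν ∈ means Y) (hext : transpose Θ ν ∈ L.extremePoints ℝ) {A : Set Y} {v : V} {c : ℝ}
    (hc : ν (Θ v) < c) (hA : ∀ y ∈ A, c ≤ Θ v y) : ν (LInf.indicator A) = 0 := by
  have hle := mul_apply_indicator_le hν hA
  rw [apply_indicator_mul_of_mem_extremePoints hΘ hν hext, mul_comm] at hle
  refine le_antisymm ?_ (apply_indicator_nonneg hν A)
  by_contra! hpos
  exact hc.not_ge (le_of_mul_le_mul_left hle hpos)

theorem apply_indicator_eq_zero_of_eq_zero (hΘ : ∀ κ ∈ means Y, transpose Θ κ ∈ L)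
    (hν : ν ∈ means Y) (hext : transpose Θ ν ∈ L.extremePoints ℝ) {A : Set Y} {v : V}
    (hv : ν (Θ v) ≠ 0) (hA : ∀ y ∈ A, Θ v y = 0) : ν (LInf.indicator A) = 0 := by
  rcases hv.lt_or_gt with hlt | hgt
  · exact apply_indicator_eq_zero_of_lt hΘ hν hext hlt fun y hy => (hA y hy).ge
  · refine apply_indicator_eq_zero_of_lt hΘ hν hext (v := -v) (c := 0) ?_ fun y hy => ?_
    · rwa [map_neg, map_neg, neg_lt_zero]
    · rw [map_neg, lp.coeFn_neg, Pi.neg_apply, hA y hy, neg_zero]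

theorem IsMinimalLeftIdeal.exists_indicator_eq_zero {L : Set (WeakDual ℝ (LInf G))}
    (hL : IsMinimalLeftIdeal L) {x y : WeakDual ℝ (LInf G)} (hx : x ∈ L.extremePoints ℝ)
    (hy : y ∈ L.extremePoints ℝ) (hxy : x ≠ y) :
    ∃ A : Set G, x (LInf.indicator A) = 0 ∧ y (LInf.indicator Aᶜ) = 0 := by
  obtain ⟨f, hf⟩ : ∃ f, x f < y f := by
    by_contra! hle
    refine hxy (DFunLike.ext _ _ fun f => le_antisymm ?_ (hle f))
    simpa using hle (-f)
  obtain ⟨c, hxc, hcy⟩ := exists_between hf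
  let Θ := poisson (LInf.translation G G) x
  have hΘ : ∀ κ ∈ means G, transpose Θ κ ∈ L := fun κ hκ => hL.convolve_mem κ hκ x hx.1
  have hΘ_self {z : WeakDual ℝ (LInf G)} (hz : z ∈ L) : transpose Θ z = z :=
    hL.convolve_eq_left hz hx.1
  have hΘ_apply {z : WeakDual ℝ (LInf G)} (hz : z ∈ L) : z (Θ f) = z f :=
    DFunLike.congr_fun (hΘ_self hz) f
  refine ⟨{g | c ≤ Θ f g}, ?_, ?_⟩
  · exact apply_indicator_eq_zero_of_lt hΘ (hL.subset_means hx.1) ((hΘ_self hx.1).symm ▸ hx)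
      ((hΘ_apply hx.1).trans_lt hxc) fun _ hg => hg
  · refine apply_indicator_eq_zero_of_lt hΘ (hL.subset_means hy.1)
      ((hΘ_self hy.1).symm ▸ hy) (v := -f) (c := -c) ?_ fun g hg => ?_
    · rwa [map_neg, map_neg, hΘ_apply hy.1, neg_lt_neg_iff]
    · rw [map_neg, lp.coeFn_neg, Pi.neg_apply, neg_le_neg_iff]
      exact (lt_of_not_ge (α := ℝ) hg).le

end ExtremePoints

section Operators

variable {Y : Type*}

/-- The C*-algebra of bounded operators on `ℓ²(Y)`. -/
abbrev Op (Y : Type*) := ℓ²(Y, ℂ) →L[ℂ] ℓ²(Y, ℂ)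

variable (G Y) in
/-- The permutation representation of `G` on `ℓ²(Y)`, for a `G`-set `Y`. -/
def permRep [MulAction G Y] : G →* unitary (Op Y) :=
  Unitary.linearIsometryEquiv.symm.toMonoidHom.comp (lpTranslation Y ℂ 2)

lemma permRep_apply [MulAction G Y] (g : G) (ξ : ℓ²(Y, ℂ)) (y : Y) :
    (permRep G Y g : Op Y) ξ y = ξ (g⁻¹ • y) := rfl

lemma lreg_eq_permRep (g : G) : lreg g = permRep G G g := by
  unfold lreg lregE
  rfl

/-- Multiplication operators on `ℓ²(Y)`. -/
def mulOp : LInf Y →L[ℝ] Op Y :=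
  have hB (_ : Y) : ‖ContinuousLinearMap.lsmul ℝ ℝ (E := ℂ)‖ ≤ (1 : NNReal) :=
    ContinuousLinearMap.opNorm_lsmul_le
  let mul := lp.holderL (p := ∞) (q := 2) 2 (fun _ : Y => ContinuousLinearMap.lsmul ℝ ℝ (E := ℂ)) hB
  LinearMap.mkContinuous
    { toFun := fun f =>
        { mul f with map_smul' := fun c ξ => by ext y; exact smul_comm (f y) c (ξ y) }
      map_add' := fun f g => by ext ξ y; exact add_smul (f y) (g y) (ξ y)
      map_smul' := fun c f => by ext ξ y; exact smul_assoc c (f y) (ξ y) } 1 fun f =>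
    ContinuousLinearMap.opNorm_le_bound _ (by positivity) fun ξ => by
      simpa using mul.le_of_opNorm₂_le_of_le (lp.norm_holderL_le 2 _ hB) le_rfl le_rfl

lemma mulOp_apply (f : LInf Y) (ξ : ℓ²(Y, ℂ)) (y : Y) : mulOp f ξ y = f y * ξ y := rfl

lemma norm_mulOp_le (f : LInf Y) : ‖mulOp f‖ ≤ ‖f‖ := by
  have hnorm : ‖mulOp (Y := Y)‖ ≤ 1 := by
    unfold mulOp
    exact LinearMap.mkContinuous_norm_le _ zero_le_one _
  simpa using mulOp.le_of_opNorm_le hnorm f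

lemma mulOp_one : mulOp (1 : LInf Y) = 1 := by
  ext ξ y
  rw [mulOp_apply, lp.infty_coeFn_one, Pi.one_apply, Complex.ofReal_one, one_mul]
  rfl

lemma transpose_mulOp_mem_means {ρ : WeakDual ℝ (Op Y)} (hρ : ρ ∈ stateSpace 1) :
    transpose mulOp ρ ∈ means Y :=
  transpose_mem_stateSpace norm_mulOp_le (by rwa [mulOp_one])

lemma isStarProjection_mulOp_indicator (A : Set Y) :
    IsStarProjection (mulOp (LInf.indicator A)) := by
  refine ⟨?_, ?_⟩
  · ext ξ y
    rw [mul_apply_eq_comp, mulOp_apply, mulOp_apply, ← mul_assoc]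
    by_cases hy : y ∈ A
    · rw [LInf.indicator_apply_of_mem hy, Complex.ofReal_one, one_mul]
    · rw [LInf.indicator_apply_of_notMem hy, Complex.ofReal_zero, zero_mul]
  · refine ContinuousLinearMap.isSelfAdjoint_iff_isSymmetric.2 fun ξ η => ?_
    rw [ContinuousLinearMap.coe_coe, lp.inner_eq_tsum, lp.inner_eq_tsum]
    refine tsum_congr fun y => ?_
    rw [mulOp_apply, mulOp_apply, RCLike.inner_apply, RCLike.inner_apply, map_mul,
      Complex.conj_ofReal]
    ring

lemma permRep_mul_mulOp [MulAction G Y] (g : G) (f : LInf Y) :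
    (permRep G Y g : Op Y) * mulOp f = mulOp (LInf.translation G Y g f) * permRep G Y g := rfl

end Operators

section UnitaryRepresentations

variable {A : Type*} [CStarAlgebra A]

/-- The action of `G` on a C*-algebra by conjugation with a unitary representation. -/
def conjAction (u : G →* unitary A) : G →* (A ≃ₗᵢ[ℝ] A) where
  toFun g := (Unitary.mulRight ℝ (u g⁻¹)).trans (Unitary.mulLeft ℝ A (u g))
  map_one' := by ext a; simp
  map_mul' g h := by ext a; simp [mul_assoc]

variable {u : G →* unitary A}

lemma conjAction_apply (g : G) (a : A) : conjAction u g a = u g * a * u g⁻¹ := by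
  rw [mul_assoc]
  rfl

lemma conjAction_one (g : G) : conjAction u g 1 = 1 := by
  rw [conjAction_apply, mul_one, ← Submonoid.coe_mul, ← map_mul, mul_inv_cancel, map_one,
    OneMemClass.coe_one]

lemma conjAction_smul_coe (g s : G) (z : ℂ) :
    conjAction u g (z • (u s : A)) = z • (u (g * s * g⁻¹) : A) := by
  rw [conjAction_apply, map_mul, map_mul, Submonoid.coe_mul, Submonoid.coe_mul, mul_smul_comm,
    smul_mul_assoc]

lemma mulOp_translation {Y : Type*} [MulAction G Y] (g : G) (f : LInf Y) :
    mulOp (LInf.translation G Y g f) = conjAction (permRep G Y) g (mulOp f) := by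
  rw [conjAction_apply, permRep_mul_mulOp, mul_assoc, ← Submonoid.coe_mul, ← map_mul,
    mul_inv_cancel, map_one, OneMemClass.coe_one, mul_one]

end UnitaryRepresentations

section NullProjections

variable {A : Type*} [CStarAlgebra A] {ρ : WeakDual ℝ A} {p : A}

lemma eq_zero_of_forall_sq_one_add_mul_le {r C : ℝ}
    (h : ∀ t : ℝ, (1 + t * r) ^ 2 ≤ 1 + C * t ^ 2) : r = 0 := by
  have hdiscrim : discrim (C - r ^ 2) (-(2 * r)) 0 ≤ 0 := discrim_le_zero fun t => by
    linarith [h t]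
  rw [discrim] at hdiscrim
  nlinarith [sq_nonneg r]

/- The C*-identity bounds `‖(1 - p) + t p a‖²` by `1 + t² ‖a‖²`. -/
theorem apply_mul_eq_zero_of_isStarProjection (hρ : ρ ∈ stateSpace (1 : A))
    (hp : IsStarProjection p) (hρp : ρ p = 0) (a : A) : ρ (p * a) = 0 := by
  refine eq_zero_of_forall_sq_one_add_mul_le (C := ‖a‖ ^ 2) fun t => ?_
  set b : A := (1 - p) + t • (p * a)
  have hρb : ρ b = 1 + t * ρ (p * a) := by
    rw [map_add, map_sub, map_smul, hρ.1, hρp, sub_zero, smul_eq_mul]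
  have hbb : star b * b = (1 - p) + (t ^ 2) • (star (p * a) * (p * a)) := by
    have hpp : p * p = p := hp.isIdempotentElem
    have hpa : (1 - p) * (p * a) = 0 := by
      rw [← mul_assoc, sub_mul, one_mul, hpp, sub_self, zero_mul]
    have hap : star (p * a) * (1 - p) = 0 := by
      rw [star_mul, hp.isSelfAdjoint.star_eq, mul_assoc, mul_sub, mul_one, hpp, sub_self, mul_zero]
    have hself : (1 - p) * (1 - p) = 1 - p := hp.one_sub.isIdempotentElem
    rw [star_add, star_smul, star_trivial t, hp.one_sub.isSelfAdjoint.star_eq, add_mul, mul_add,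
      mul_add, hself, mul_smul_comm, hpa, smul_mul_assoc, hap, smul_mul_smul_comm, ← sq]
    simp only [smul_zero, add_zero, zero_add]
  calc (1 + t * ρ (p * a)) ^ 2 = |ρ b| ^ 2 := by rw [sq_abs, hρb]
    _ ≤ ‖b‖ ^ 2 := by gcongr; exact abs_apply_le_of_mem_stateSpace hρ b
    _ = ‖(1 - p) + (t ^ 2) • (star (p * a) * (p * a))‖ := by
      rw [sq, ← CStarRing.norm_star_mul_self, hbb]
    _ ≤ ‖1 - p‖ + t ^ 2 * (‖p * a‖ * ‖p * a‖) := by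
      refine (norm_add_le _ _).trans_eq ?_
      rw [norm_smul, CStarRing.norm_star_mul_self, Real.norm_of_nonneg (sq_nonneg t)]
    _ ≤ 1 + t ^ 2 * (‖a‖ * ‖a‖) := by
      have hpa : ‖p * a‖ ≤ ‖a‖ :=
        (norm_mul_le p a).trans (mul_le_of_le_one_left (norm_nonneg a) hp.norm_le)
      gcongr
      exact hp.one_sub.norm_le
    _ = 1 + ‖a‖ ^ 2 * t ^ 2 := by ring

theorem apply_mul_isStarProjection_eq_zero (hρ : ρ ∈ stateSpace (1 : A))
    (hp : IsStarProjection p) (hρp : ρ p = 0) (a : A) : ρ (a * p) = 0 := by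
  let T : A →L[ℝ] A := (starL' ℝ : A ≃L[ℝ] A)
  have hstar : transpose T ρ ∈ stateSpace (1 : A) :=
    transpose_mem_stateSpace (fun a => (norm_star a).le) (by rwa [show T 1 = 1 from star_one A])
  have hTp : T p = p := hp.isSelfAdjoint.star_eq
  have hzero := apply_mul_eq_zero_of_isStarProjection hstar hp
    ((congrArg ρ hTp).trans hρp) (star a)
  have hT : T (p * star a) = a * p := by
    change star (p * star a) = a * p
    rw [star_mul, star_star, hp.isSelfAdjoint.star_eq]
  rwa [transpose_apply, hT] at hzero

end NullProjections

section StatesOfOperators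

lemma LInf.translation_indicator {Y : Type*} [MulAction G Y] (g : G) (A : Set Y) :
    LInf.translation G Y g (indicator A) = indicator ((g⁻¹ • ·) ⁻¹' A) := rfl

/- Pulling `x` and its translate apart by a set `A` writes `λ_s` as `λ_s 1_A + 1_B λ_s` with null
sets `A` and `B`. -/
theorem IsMinimalLeftIdeal.apply_smul_permRep_eq_zero {L : Set (WeakDual ℝ (LInf G))}
    (hL : IsMinimalLeftIdeal L) {ρ : WeakDual ℝ (Op G)} (hρ : ρ ∈ stateSpace 1)
    (hext : transpose mulOp ρ ∈ L.extremePoints ℝ) {s : G}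
    (hs : s ⊳ transpose mulOp ρ ≠ transpose mulOp ρ) (z : ℂ) :
    ρ (z • (permRep G G s : Op G)) = 0 := by
  have hne : transpose mulOp ρ ≠ s⁻¹ ⊳ transpose mulOp ρ := fun h => hs <| by
    nth_rw 1 [h, ← inv_inv s]
    exact dualAction_inv_dualAction ..
  obtain ⟨A, hA, hAc⟩ :=
    hL.exists_indicator_eq_zero hext (hL.translate_mem_extremePoints hext s⁻¹) hne
  rw [dualAction_apply, inv_inv, LInf.translation_indicator] at hAc
  have hcut : z • (permRep G G s : Op G) =
      (z • (permRep G G s : Op G)) * mulOp (LInf.indicator A) +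
        mulOp (LInf.indicator ((s⁻¹ • ·) ⁻¹' Aᶜ)) * (z • (permRep G G s : Op G)) := by
    rw [mul_smul_comm, ← LInf.translation_indicator, ← permRep_mul_mulOp, smul_mul_assoc,
      ← smul_add, ← mul_add, ← map_add, LInf.indicator_add_indicator_compl, mulOp_one, mul_one]
  rw [hcut, map_add]
  exact (congrArg₂ (· + ·)
    (apply_mul_isStarProjection_eq_zero hρ (isStarProjection_mulOp_indicator A) hA _)
    (apply_mul_eq_zero_of_isStarProjection hρ (isStarProjection_mulOp_indicator _) hAc _)).trans
      (add_zero 0)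

lemma permRep_mul_mulOp_indicator_fixedBy {Y : Type*} [MulAction G Y] (s : G) :
    (permRep G Y s : Op Y) * mulOp (LInf.indicator (MulAction.fixedBy Y s)) =
      mulOp (LInf.indicator (MulAction.fixedBy Y s)) := by
  have hpreimage : (s⁻¹ • ·) ⁻¹' MulAction.fixedBy Y s = MulAction.fixedBy Y s :=
    Set.ext fun y => MulAction.smul_inv_mem_fixedBy_iff_mem_fixedBy
  rw [permRep_mul_mulOp, LInf.translation_indicator, hpreimage]
  refine ContinuousLinearMap.ext fun ξ => lp.ext <| funext fun y => ?_
  rw [mul_apply_eq_comp, mulOp_apply, mulOp_apply, permRep_apply]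
  by_cases hy : y ∈ MulAction.fixedBy Y s
  · rw [inv_smul_eq_iff.2 (MulAction.mem_fixedBy.1 hy).symm]
  · rw [LInf.indicator_apply_of_notMem hy, Complex.ofReal_zero, zero_mul, zero_mul]

theorem apply_permRep_eq_one {Y : Type*} [MulAction G Y] {ρ : WeakDual ℝ (Op Y)}
    (hρ : ρ ∈ stateSpace 1) {s : G}
    (hs : transpose mulOp ρ (LInf.indicator (MulAction.fixedBy Y s)ᶜ) = 0) :
    ρ (permRep G Y s : Op Y) = 1 := by
  have hsplit (a : Op Y) : ρ a = ρ (a * mulOp (LInf.indicator (MulAction.fixedBy Y s))) := by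
    conv_lhs => rw [← mul_one a, ← mulOp_one,
      ← LInf.indicator_add_indicator_compl (MulAction.fixedBy Y s), map_add, mul_add, map_add]
    exact (congrArg _ (apply_mul_isStarProjection_eq_zero hρ
      (isStarProjection_mulOp_indicator _) hs a)).trans (add_zero _)
  rw [hsplit, permRep_mul_mulOp_indicator_fixedBy, ← one_mul (mulOp _), ← hsplit, hρ.1]

theorem exists_mem_stateSpace_of_forall_le {V : Type*} [NormedAddCommGroup V] [NormedSpace ℝ V]
    {e : V} (he : ‖e‖ ≤ 1) (W : Submodule ℝ V) (hW : ∀ w ∈ W, 1 ≤ ‖e - w‖) :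
    ∃ ψ ∈ stateSpace e, ∀ w ∈ W, ψ w = 0 := by
  have hnorm : ‖W.mkQ e‖ = 1 := by
    refine le_antisymm ((Submodule.Quotient.norm_mk_le W e).trans he) ?_
    refine QuotientAddGroup.le_norm_iff.2 fun v hv => ?_
    have hvW : e - v ∈ W := by
      rw [← Submodule.Quotient.eq W]
      exact hv.symm
    simpa using hW _ hvW
  obtain ⟨f, hf, hfe⟩ := exists_dual_vector'' ℝ (W.mkQ e)
  refine ⟨f.comp W.mkQL, ⟨?_, fun v => ?_⟩, fun w hw => ?_⟩
  · refine hfe.trans ?_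
    rw [hnorm]
    rfl
  · calc f (W.mkQ v) ≤ ‖f (W.mkQ v)‖ := Real.le_norm_self _
      _ ≤ 1 * ‖W.mkQ v‖ := f.le_of_opNorm_le hf _
      _ ≤ ‖v‖ := by rw [one_mul]; exact Submodule.Quotient.norm_mk_le W v
  · change f (W.mkQ w) = 0
    rw [Submodule.mkQ_apply, (Submodule.Quotient.mk_eq_zero W).2 hw, map_zero]

end StatesOfOperators

section GroupAlgebras

variable {A B : Type*} [CStarAlgebra A] [CStarAlgebra B]

/-- The representation of the group algebra that extends a unitary representation. -/
def groupAlgebraRep (u : G →* unitary A) : MonoidAlgebra ℂ G →ₐ[ℂ] A :=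
  MonoidAlgebra.lift ℂ A G ((unitary A).subtype.comp u)

/-- The C*-algebra generated by a unitary representation. -/
def groupCstar (u : G →* unitary A) : StarSubalgebra ℂ A :=
  (StarAlgebra.adjoin ℂ (Set.range fun g => (u g : A))).topologicalClosure

variable {u : G →* unitary A}

lemma groupAlgebraRep_single (g : G) (z : ℂ) :
    groupAlgebraRep u (MonoidAlgebra.single g z) = z • (u g : A) :=
  MonoidAlgebra.lift_single ..

lemma groupAlgebraRep_eq_sum (c : MonoidAlgebra ℂ G) :
    groupAlgebraRep u c = ∑ g ∈ c.coeff.support, c.coeff g • (u g : A) :=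
  MonoidAlgebra.lift_apply ..

lemma star_groupAlgebraRep_mem_range (c : MonoidAlgebra ℂ G) :
    star (groupAlgebraRep u c) ∈ (groupAlgebraRep u).range := by
  rw [groupAlgebraRep_eq_sum, star_sum]
  refine sum_mem fun g _ => ⟨MonoidAlgebra.single g⁻¹ (star (c.coeff g)), ?_⟩
  rw [AlgHom.toRingHom_eq_coe, RingHom.coe_coe, groupAlgebraRep_single, map_inv, star_smul,
    ← Unitary.star_eq_inv, Unitary.coe_star]

lemma coe_adjoin_range_eq_range_groupAlgebraRep :
    (StarAlgebra.adjoin ℂ (Set.range fun g => (u g : A)) : Set A) =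
      Set.range (groupAlgebraRep u) := by
  let R : StarSubalgebra ℂ A :=
    { (groupAlgebraRep u).range with
      star_mem' := by rintro _ ⟨c, rfl⟩; exact star_groupAlgebraRep_mem_range c }
  refine Set.Subset.antisymm (StarAlgebra.adjoin_le (S := R) ?_) ?_
  · rintro _ ⟨g, rfl⟩
    exact ⟨MonoidAlgebra.single g 1, (groupAlgebraRep_single g 1).trans (one_smul ℂ _)⟩
  · rintro _ ⟨c, rfl⟩
    rw [groupAlgebraRep_eq_sum]
    exact sum_mem fun g _ =>
      SMulMemClass.smul_mem _ (StarAlgebra.subset_adjoin ℂ _ (Set.mem_range_self g))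

lemma coe_groupCstar : (groupCstar u : Set A) = closure (Set.range (groupAlgebraRep u)) := by
  rw [groupCstar, StarSubalgebra.topologicalClosure_coe, coe_adjoin_range_eq_range_groupAlgebraRep]

lemma isClosed_groupCstar : IsClosed (groupCstar u : Set A) :=
  StarSubalgebra.isClosed_topologicalClosure _

lemma groupAlgebraRep_mem_groupCstar (c : MonoidAlgebra ℂ G) :
    groupAlgebraRep u c ∈ groupCstar u := by
  rw [← SetLike.mem_coe, coe_groupCstar]
  exact subset_closure (Set.mem_range_self c)

lemma coe_mem_groupCstar (g : G) : (u g : A) ∈ groupCstar u :=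
  StarSubalgebra.le_topologicalClosure _ (StarAlgebra.subset_adjoin ℂ _ (Set.mem_range_self g))

instance : CStarAlgebra (groupCstar u) :=
  haveI := isClosed_groupCstar (u := u)
  inferInstance

lemma redCstar_eq_groupCstar : redCstar G = groupCstar (permRep G G) := by
  rw [redCstar, groupCstar, show lreg (G := G) = fun g => _ from funext lreg_eq_permRep]

/-- The direct sum of two unitary representations. -/
def directSum (u : G →* unitary A) (v : G →* unitary B) : G →* unitary (A × B) :=
  (((unitary A).subtype.comp u).prod ((unitary B).subtype.comp v)).codRestrict _ fun g =>
    ⟨Prod.ext (u g).2.1 (v g).2.1, Prod.ext (u g).2.2 (v g).2.2⟩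

variable {v : G →* unitary B}

lemma groupAlgebraRep_directSum (c : MonoidAlgebra ℂ G) :
    groupAlgebraRep (directSum u v) c = (groupAlgebraRep u c, groupAlgebraRep v c) := by
  simp only [groupAlgebraRep_eq_sum]
  exact Prod.ext (Prod.fst_sum ..) (Prod.snd_sum ..)

theorem exists_starAlgHom_groupCstar
    (huv : ∀ c, ‖groupAlgebraRep v c‖ ≤ ‖groupAlgebraRep u c‖) :
    ∃ π : groupCstar u →⋆ₐ[ℂ] B, ∀ c,
      π ⟨groupAlgebraRep u c, groupAlgebraRep_mem_groupCstar c⟩ = groupAlgebraRep v c := by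
  let D := groupCstar (directSum u v)
  have hD (d : D) : ‖(d : A × B).2‖ ≤ ‖(d : A × B).1‖ := by
    have hd : (d : A × B) ∈ closure (Set.range (groupAlgebraRep (directSum u v))) := by
      rw [← coe_groupCstar]
      exact d.2
    refine closure_minimal ?_ (isClosed_le (by fun_prop) (by fun_prop) :
      IsClosed {d : A × B | ‖d.2‖ ≤ ‖d.1‖}) hd
    rintro _ ⟨c, rfl⟩
    rw [groupAlgebraRep_directSum]
    exact huv c
  let φ : D →⋆ₐ[ℂ] A := (StarAlgHom.fst ℂ A B).comp D.subtype
  have hφ : Isometry φ := AddMonoidHomClass.isometry_of_norm φ fun d =>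
    (max_eq_left (hD d)).symm
  have hrange : groupCstar u ≤ φ.range := by
    refine StarSubalgebra.topologicalClosure_minimal (StarAlgebra.adjoin_le ?_) ?_
    · rintro _ ⟨g, rfl⟩
      exact ⟨⟨_, coe_mem_groupCstar g⟩, rfl⟩
    · exact hφ.isClosedEmbedding.isClosed_range
  let e := StarAlgEquiv.ofInjective φ hφ.injective
  refine ⟨((StarAlgHom.snd ℂ A B).comp D.subtype).comp
    ((e.symm : φ.range →⋆ₐ[ℂ] D).comp (StarSubalgebra.inclusion hrange)), fun c => ?_⟩
  let d : D := ⟨_, groupAlgebraRep_mem_groupCstar c⟩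
  have hd : (d : A × B) = (groupAlgebraRep u c, groupAlgebraRep v c) := groupAlgebraRep_directSum c
  have he : e.symm ⟨groupAlgebraRep u c, hrange (groupAlgebraRep_mem_groupCstar c)⟩ = d := by
    rw [← e.symm_apply_apply d]
    congr 1
    exact Subtype.ext (congrArg Prod.fst hd).symm
  exact (congrArg (fun d : D => (d : A × B).2) he).trans (congrArg Prod.snd hd)

theorem norm_groupAlgebraRep_eq_of_isSimple [Nontrivial B]
    (hu : ∀ I : TwoSidedIdeal (groupCstar u), IsClosed (I : Set (groupCstar u)) → I = ⊥ ∨ I = ⊤)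
    (huv : ∀ c, ‖groupAlgebraRep v c‖ ≤ ‖groupAlgebraRep u c‖) (c : MonoidAlgebra ℂ G) :
    ‖groupAlgebraRep v c‖ = ‖groupAlgebraRep u c‖ := by
  obtain ⟨π, hπ⟩ := exists_starAlgHom_groupCstar huv
  have hcont : Continuous π := AddMonoidHomClass.continuous_of_bound π 1 fun a => by
    rw [one_mul]
    exact NonUnitalStarAlgHom.norm_apply_le π a
  have hker : (TwoSidedIdeal.ker π : Set (groupCstar u)) = π ⁻¹' {0} :=
    Set.ext fun _ => TwoSidedIdeal.mem_ker π
  have hinj : Function.Injective π := by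
    refine (TwoSidedIdeal.ker_eq_bot π).1 ((hu _ ?_).resolve_right fun htop => ?_)
    · rw [hker]
      exact isClosed_singleton.preimage hcont
    · have hone : (1 : groupCstar u) ∈ TwoSidedIdeal.ker π := htop ▸ trivial
      exact one_ne_zero ((map_one π).symm.trans ((TwoSidedIdeal.mem_ker π).1 hone))
  rw [← hπ, NonUnitalStarAlgHom.norm_map π hinj]
  rfl

end GroupAlgebras

section BasisVectors

variable {Y : Type*}

/-- The unit basis vector `δ_y` of `ℓ²(Y)`. -/
abbrev basisVec (y : Y) : ℓ²(Y, ℂ) := lpDelta ℂ 2 y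

lemma norm_basisVec (y : Y) : ‖basisVec y‖ = 1 := norm_lpDelta two_pos y

lemma permRep_basisVec [MulAction G Y] (g : G) (y : Y) :
    (permRep G Y g : Op Y) (basisVec y) = basisVec (g • y) :=
  lpTranslation_lpDelta g y

lemma eq_zero_of_forall_basisVec {T : Op Y} (h : ∀ y, T (basisVec y) = 0) : T = 0 := by
  classical
  exact lp.ext_continuousLinearMap (by norm_num) fun y => ContinuousLinearMap.ext_ring (h y)

/-- The functional `T ↦ Re ⟨ξ, T ξ⟩`. -/
def vectorState (ξ : ℓ²(Y, ℂ)) : WeakDual ℝ (Op Y) :=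
  StrongDual.toWeakDual <| Complex.reCLM.comp <|
    ((innerSL ℂ ξ).comp (ContinuousLinearMap.apply ℂ _ ξ)).restrictScalars ℝ

lemma vectorState_apply (ξ : ℓ²(Y, ℂ)) (T : Op Y) : vectorState ξ T = (inner ℂ ξ (T ξ)).re := rfl

lemma vectorState_mem_stateSpace {ξ : ℓ²(Y, ℂ)} (hξ : ‖ξ‖ = 1) :
    vectorState ξ ∈ stateSpace (1 : Op Y) := by
  refine ⟨?_, fun T => ?_⟩
  · rw [vectorState_apply, one_apply_eq_self, inner_self_eq_norm_sq_to_K, hξ]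
    norm_num
  · calc (inner ℂ ξ (T ξ)).re ≤ ‖ξ‖ * ‖T ξ‖ := re_inner_le_norm (𝕜 := ℂ) ξ (T ξ)
      _ ≤ 1 * (‖T‖ * 1) := by
        rw [hξ, ← hξ]
        gcongr
        exact T.le_opNorm ξ
      _ = ‖T‖ := by ring

lemma vectorState_star_mul_self (ξ : ℓ²(Y, ℂ)) (T : Op Y) :
    vectorState ξ (star T * T) = ‖T ξ‖ ^ 2 := by
  rw [vectorState_apply, mul_apply_eq_comp, ContinuousLinearMap.star_eq_adjoint,
    ContinuousLinearMap.adjoint_inner_right]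
  exact inner_self_eq_norm_sq (𝕜 := ℂ) (T ξ)

lemma inner_basisVec (y : Y) (ξ : ℓ²(Y, ℂ)) : inner ℂ (basisVec y) ξ = ξ y := by
  classical rw [basisVec, lpDelta, lp.inner_single_left, RCLike.inner_apply, map_one, mul_one]

lemma vectorState_basisVec_one_smul_permRep {s : G} (hs : s ≠ 1) (z : ℂ) :
    vectorState (basisVec 1) (z • (permRep G G s : Op G)) = 0 := by
  rw [vectorState_apply, smul_apply, permRep_basisVec, inner_smul_right,
    inner_basisVec, smul_eq_mul, mul_one, lpDelta_apply_of_ne hs.symm, mul_zero, Complex.zero_re]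

end BasisVectors

section CanonicalTrace

variable {A : Type*} [CStarAlgebra A] {u : G →* unitary A}

lemma apply_smul_one_of_mem_stateSpace {ρ : WeakDual ℝ A} (hρ : ρ ∈ stateSpace 1) (z : ℂ) :
    ρ (z • (1 : A)) = z.re := by
  have hI : ρ (Complex.I • (1 : A)) = 0 := by
    refine eq_zero_of_forall_sq_one_add_mul_le (C := 1) fun t => ?_
    have hnorm : ‖(1 : A) + t • (Complex.I • (1 : A))‖ ≤ ‖(1 + t * Complex.I : ℂ)‖ := by
      have hsmul : (1 : A) + t • (Complex.I • (1 : A)) = (1 + t * Complex.I : ℂ) • (1 : A) := by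
        rw [add_smul, one_smul, mul_smul]
        rfl
      rw [hsmul, norm_smul]
      exact mul_le_of_le_one_right (norm_nonneg _) (IsStarProjection.one A).norm_le
    calc (1 + t * ρ (Complex.I • (1 : A))) ^ 2 = |ρ (1 + t • (Complex.I • (1 : A)))| ^ 2 := by
          rw [sq_abs, map_add, map_smul ρ t (Complex.I • (1 : A)), hρ.1, smul_eq_mul]
      _ ≤ ‖(1 + t * Complex.I : ℂ)‖ ^ 2 := by
        gcongr
        exact (abs_apply_le_of_mem_stateSpace hρ _).trans hnorm
      _ = 1 + 1 * t ^ 2 := by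
        rw [Complex.sq_norm, Complex.normSq_apply]
        simp [sq]
  have hz : z • (1 : A) = z.re • (1 : A) + z.im • (Complex.I • (1 : A)) := by
    conv_lhs => rw [← Complex.re_add_im z, add_smul, mul_smul]
    rfl
  rw [hz, map_add, map_smul, map_smul, hI, hρ.1, smul_zero, add_zero, smul_eq_mul, mul_one]

theorem eqOn_groupCstar_of_forall_apply_smul_eq_zero {φ ψ : WeakDual ℝ A}
    (hφ : φ ∈ stateSpace 1) (hψ : ψ ∈ stateSpace 1)
    (hφu : ∀ s ≠ 1, ∀ z : ℂ, φ (z • (u s : A)) = 0)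
    (hψu : ∀ s ≠ 1, ∀ z : ℂ, ψ (z • (u s : A)) = 0) : Set.EqOn φ ψ (groupCstar u) := by
  have hu (s : G) (z : ℂ) : φ (z • (u s : A)) = ψ (z • (u s : A)) := by
    by_cases hs : s = 1
    · rw [hs, map_one, OneMemClass.coe_one, apply_smul_one_of_mem_stateSpace hφ,
        apply_smul_one_of_mem_stateSpace hψ]
    · rw [hφu s hs, hψu s hs]
  rw [coe_groupCstar]
  refine Set.EqOn.closure ?_ (map_continuous φ) (map_continuous ψ)
  rintro _ ⟨c, rfl⟩
  rw [groupAlgebraRep_eq_sum, map_sum, map_sum]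
  exact Finset.sum_congr rfl fun g _ => hu g _

end CanonicalTrace

section Simplicity

variable {A : Type*} [CStarAlgebra A] {u : G →* unitary A} {I : TwoSidedIdeal (groupCstar u)}

lemma exists_mem_ideal_coe_eq_conjAction {a : groupCstar u} (ha : a ∈ I) (g : G) :
    ∃ b ∈ I, (b : A) = conjAction u g a :=
  ⟨⟨_, coe_mem_groupCstar g⟩ * a * ⟨_, coe_mem_groupCstar g⁻¹⟩,
    I.mul_mem_right _ _ (I.mul_mem_left _ _ ha), (conjAction_apply ..).symm⟩

theorem exists_mem_stateSpace_of_ne_top (hI : I ≠ ⊤) :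
    ∃ ρ ∈ stateSpace (1 : A), ∀ a ∈ I, ρ a = 0 := by
  let W : Submodule ℝ A := ((TwoSidedIdeal.asIdeal I).restrictScalars ℝ).map
    ((groupCstar u).subtype.toAlgHom.toLinearMap.restrictScalars ℝ)
  obtain ⟨ρ, hρ, hρW⟩ := exists_mem_stateSpace_of_forall_le (IsStarProjection.one A).norm_le W <| by
    rintro _ ⟨a, ha, rfl⟩
    by_contra! hlt
    have ha_unit : IsUnit (1 - (1 - a)) := isUnit_one_sub_of_norm_lt_one hlt
    rw [sub_sub_cancel] at ha_unit
    obtain ⟨b, hb⟩ := ha_unit.exists_left_inv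
    exact hI (I.eq_top (hb ▸ I.mul_mem_left b a (TwoSidedIdeal.mem_asIdeal.1 ha)))
  exact ⟨ρ, hρ, fun a ha => hρW _ ⟨a, TwoSidedIdeal.mem_asIdeal.2 ha, rfl⟩⟩

lemma convolve_conjAction_apply_eq_zero {ρ : WeakDual ℝ A} (hρ : ∀ a ∈ I, ρ a = 0)
    (n : WeakDual ℝ (LInf G)) {a : groupCstar u} (ha : a ∈ I) :
    convolve (conjAction u) ρ n a = 0 := by
  have hzero : poisson (conjAction u) ρ a = 0 := by
    ext g
    obtain ⟨b, hb, hba⟩ := exists_mem_ideal_coe_eq_conjAction ha g⁻¹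
    exact (congrArg ρ hba.symm).trans (hρ b hb)
  rw [convolve_apply, hzero, map_zero]

variable (G) in
/-- `G` has free translates if every finite set of non-trivial elements moves some translate of
each extreme point of a minimal left ideal of means. For the minimal left ideals, whose extreme
points model the points of the Furstenberg boundary, this is topological freeness of the action. -/
def HasFreeTranslates : Prop :=
  ∀ L : Set (WeakDual ℝ (LInf G)), IsMinimalLeftIdeal L → ∀ x ∈ L.extremePoints ℝ,
    ∀ F : Finset G, 1 ∉ F → ∃ g : G, ∀ s ∈ F, s ⊳ g ⊳ x ≠ g ⊳ x

lemma HasFreeTranslates.exists_convolve_eq_zero_of_finset (hG : HasFreeTranslates G)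
    {ρ : WeakDual ℝ (Op G)} (hρ : ρ ∈ stateSpace 1) {F : Finset G} (hF : 1 ∉ F) :
    ∃ n ∈ means G, ∀ s ∈ F, ∀ z : ℂ,
      convolve (conjAction (permRep G G)) ρ n (z • (permRep G G s : Op G)) = 0 := by
  obtain ⟨L, hL, hLρ⟩ := exists_isMinimalLeftIdeal_subset_image (transpose_mulOp_mem_means hρ)
  obtain ⟨x, hx⟩ := extremePoints_nonempty_of_isCompact hL.isCompact hL.nonempty
  obtain ⟨m, hm, hmx⟩ := hLρ hx.1
  obtain ⟨g, hg⟩ := hG L hL x hx F hF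
  have hn : g ⊳ m ∈ means G := dualAction_mem_stateSpace translation_one hm g
  have htranspose : transpose mulOp (convolve (conjAction (permRep G G)) ρ (g ⊳ m)) = g ⊳ x := by
    rw [← convolve_transpose mulOp_translation, ← hmx]
    exact (dualAction_convolve g m).symm
  refine ⟨g ⊳ m, hn, fun s hs => hL.apply_smul_permRep_eq_zero
    (convolve_mem_stateSpace conjAction_one hρ hn) ?_ ?_⟩
  · rw [htranspose]
    exact hL.translate_mem_extremePoints hx g
  · rw [htranspose]
    exact hg s hs

theorem HasFreeTranslates.exists_convolve_eq_zero (hG : HasFreeTranslates G)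
    {ρ : WeakDual ℝ (Op G)} (hρ : ρ ∈ stateSpace 1) :
    ∃ n ∈ means G, ∀ s ≠ 1, ∀ z : ℂ,
      convolve (conjAction (permRep G G)) ρ n (z • (permRep G G s : Op G)) = 0 := by
  classical
  let N (s : {s : G // s ≠ 1}) : Set (WeakDual ℝ (LInf G)) :=
    {n | ∀ z : ℂ, convolve (conjAction (permRep G G)) ρ n (z • (permRep G G s : Op G)) = 0}
  have hN (s) : IsClosed (N s) := by
    simp only [N, Set.ofPred_forall]
    exact isClosed_iInter fun z => isClosed_eq
      ((WeakDual.eval_continuous _).comp (ContinuousLinearMap.continuous _)) continuous_const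
  obtain ⟨n, hn, hnN⟩ := (isCompact_stateSpace 1).inter_iInter_nonempty N hN fun F => by
    obtain ⟨n, hn, hnF⟩ := hG.exists_convolve_eq_zero_of_finset hρ
      (F := F.map (Function.Embedding.subtype _)) (by simp)
    exact ⟨n, hn, Set.mem_iInter₂.2 fun s hs => hnF s (Finset.mem_map_of_mem _ hs)⟩
  exact ⟨n, hn, fun s hs => Set.mem_iInter.1 hnN ⟨s, hs⟩⟩

lemma isCstarSimple_iff :
    IsCstarSimple G ↔ ∀ I : TwoSidedIdeal (groupCstar (permRep G G)),
      IsClosed (I : Set (groupCstar (permRep G G))) → I = ⊥ ∨ I = ⊤ := by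
  rw [IsCstarSimple, redCstar_eq_groupCstar]

theorem HasFreeTranslates.isCstarSimple (hG : HasFreeTranslates G) : IsCstarSimple G := by
  refine isCstarSimple_iff.2 fun I _ => or_iff_not_imp_right.2 fun hI => ?_
  obtain ⟨ρ, hρ, hρI⟩ := exists_mem_stateSpace_of_ne_top hI
  obtain ⟨n, hn, hnρ⟩ := hG.exists_convolve_eq_zero hρ
  have htrace := eqOn_groupCstar_of_forall_apply_smul_eq_zero
    (convolve_mem_stateSpace conjAction_one hρ hn) (vectorState_mem_stateSpace (norm_basisVec 1))
    hnρ fun s hs z => vectorState_basisVec_one_smul_permRep hs z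
  have hzero {a : groupCstar (permRep G G)} (ha : a ∈ I) : (a : Op G) (basisVec 1) = 0 := by
    have hsq : vectorState (basisVec 1) (star (a : Op G) * (a : Op G)) = 0 :=
      (htrace (star a * a).2).symm.trans
        (convolve_conjAction_apply_eq_zero hρI n (I.mul_mem_left (star a) a ha))
    rwa [vectorState_star_mul_self, sq_eq_zero_iff, norm_eq_zero] at hsq
  refine eq_bot_iff.2 fun a ha => (TwoSidedIdeal.mem_bot _).2 (Subtype.ext ?_)
  refine eq_zero_of_forall_basisVec fun g => ?_
  obtain ⟨b, hb, hba⟩ := exists_mem_ideal_coe_eq_conjAction ha g⁻¹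
  have hbg := hzero hb
  rw [hba, conjAction_apply, inv_inv, mul_apply_eq_comp, mul_apply_eq_comp, permRep_basisVec,
    smul_eq_mul, mul_one] at hbg
  exact (Unitary.linearIsometryEquiv (permRep G G g⁻¹)).map_eq_zero_iff.1 hbg

end Simplicity

section ChabautySpace

open Filter Topology

variable {g h : G} {H K : Subgroup G}

lemma mem_conjSub : h ∈ conjSub g H ↔ g⁻¹ * h * g ∈ H :=
  Subgroup.mem_map_equiv.trans (by rw [MulAut.conj_symm_apply])

lemma conjSub_mul (g h : G) (H : Subgroup G) : conjSub (g * h) H = conjSub g (conjSub h H) := by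
  ext k
  simp only [mem_conjSub, mul_inv_rev, mul_assoc]

lemma conjSub_one (H : Subgroup G) : conjSub 1 H = H := by
  ext k
  rw [mem_conjSub, inv_one, one_mul, mul_one]

lemma tendsto_chabauty_iff {X : Type*} {l : Filter X} {f : X → Subgroup G} :
    Tendsto f l (𝓝 K) ↔ ∀ g, ∀ᶠ x in l, (g ∈ f x ↔ g ∈ K) := by
  classical
  have hind : IsInducing fun (H : Subgroup G) (g : G) => decide (g ∈ H) := by
    refine ⟨?_⟩
    unfold chabauty
    congr!
  simp only [hind.tendsto_nhds_iff, tendsto_pi_nhds, nhds_discrete, tendsto_pure,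
    Function.comp_apply, decide_eq_decide]

lemma eventually_mem_iff_mem (K : Subgroup G) (g : G) : ∀ᶠ H in 𝓝 K, (g ∈ H ↔ g ∈ K) :=
  tendsto_chabauty_iff.1 tendsto_id g

lemma isClopen_setOf_mem (g : G) : IsClopen {H : Subgroup G | g ∈ H} := by
  refine ⟨isOpen_compl_iff.1 (isOpen_iff_eventually.2 fun K hK => ?_),
    isOpen_iff_eventually.2 fun K hK => ?_⟩ <;>
  filter_upwards [eventually_mem_iff_mem K g] with H hH
  · exact mt hH.1 hK
  · exact hH.2 hK

lemma continuous_conjSub (g : G) : Continuous (conjSub g) :=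
  continuous_iff_continuousAt.2 fun K => tendsto_chabauty_iff.2 fun h => by
    simpa only [mem_conjSub] using eventually_mem_iff_mem K (g⁻¹ * h * g)

instance : CompactSpace (Subgroup G) := by
  refine ⟨isCompact_iff_ultrafilter_le_nhds.2 fun l _ => ?_⟩
  let K : Subgroup G :=
    { carrier := {g | ∀ᶠ H : Subgroup G in l, g ∈ H}
      one_mem' := .of_forall fun H => H.one_mem
      mul_mem' := fun ha hb => by filter_upwards [ha, hb] with H using H.mul_mem
      inv_mem' := fun ha => by filter_upwards [ha] with H using H.inv_mem }
  refine ⟨K, Set.mem_univ K, tendsto_chabauty_iff.2 fun g => ?_⟩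
  by_cases hg : g ∈ K
  · filter_upwards [show ∀ᶠ H : Subgroup G in l, g ∈ H from hg] with H hH
    exact iff_of_true hH hg
  · filter_upwards [Ultrafilter.eventually_not.2 hg] with H hH
    exact iff_of_false hH hg

lemma conjSub_mem_closure_orbit (hK : K ∈ closure {L | ∃ g, L = conjSub g H}) (g : G) :
    conjSub g K ∈ closure {L | ∃ g, L = conjSub g H} := by
  refine map_mem_closure (continuous_conjSub g) hK ?_
  rintro _ ⟨h, rfl⟩
  exact ⟨g * h, (conjSub_mul g h H).symm⟩

lemma mem_closure_orbit (H : Subgroup G) : H ∈ closure {L | ∃ g, L = conjSub g H} :=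
  subset_closure ⟨1, (conjSub_one H).symm⟩

theorem exists_isURS_subset_closure_orbit (H : Subgroup G) :
    ∃ X, IsURS G X ∧ X ⊆ closure {L | ∃ g, L = conjSub g H} := by
  obtain ⟨X, hXsub, hXclosed, hXne, hXinv, hXmin⟩ := exists_minimal_invariant (T := conjSub)
    isClosed_closure.isCompact isClosed_closure ⟨H, mem_closure_orbit H⟩
    fun g K hK => conjSub_mem_closure_orbit hK g
  refine ⟨X, ⟨hXne, hXclosed, hXinv, fun K hK L hL => ?_⟩, hXsub⟩
  rwa [hXmin (closure {L | ∃ g, L = conjSub g K}) (closure_minimal ?_ hXclosed) isClosed_closure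
    ⟨K, mem_closure_orbit K⟩ fun g L hL => conjSub_mem_closure_orbit hL g]
  rintro _ ⟨g, rfl⟩
  exact hXinv g K hK

end ChabautySpace

section RelativeAmenability

open Filter Topology

variable {V : Type*} [NormedAddCommGroup V] [NormedSpace ℝ V]

lemma stabilizer_dualAction (α : G →* (V ≃ₗᵢ[ℝ] V)) (ψ : WeakDual ℝ V) (g : G) :
    stabilizer α (dualAction α g ψ) = conjSub g (stabilizer α ψ) := by
  ext k
  rw [mem_conjSub, mem_stabilizer_iff, mem_stabilizer_iff, dualAction_mul, dualAction_mul]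
  constructor
  · intro hk
    rw [hk, dualAction_inv_dualAction]
  · intro hk
    conv_rhs => rw [← hk, ← dualAction_mul, mul_inv_cancel, map_one]
    rfl

lemma apply_of_mem_stabilizer {α : G →* (V ≃ₗᵢ[ℝ] V)} {ψ : WeakDual ℝ V} {g : G}
    (hg : g ∈ stabilizer α ψ) (v : V) : ψ (α g v) = ψ v := by
  conv_lhs => rw [← inv_inv g]
  exact DFunLike.congr_fun (mem_stabilizer_iff.1 (inv_mem hg)) v

theorem isAmenable_of_le_stabilizer {K : Subgroup G} {m : WeakDual ℝ (LInf G)} (hm : m ∈ means G)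
    (hK : K ≤ stabilizer (LInf.translation G G) m) : IsAmenable K := by
  obtain ⟨S, hS, -⟩ := K.exists_isComplement_right 1
  let r : G → K := fun g => (hS.equiv g).1
  have hr (k : K) (g : G) : r (k * g) = k * r g := congrArg Prod.fst (hS.equiv_mul_left k g)
  have hrm : transpose (LInf.comap r) m ∈ means K := transpose_comap_mem_means r hm
  refine ⟨(transpose (LInf.comap r) m : WeakDual ℝ (LInf K)), hrm.1,
    fun f hf => apply_nonneg_of_mem_means hrm hf, fun k f => ?_⟩
  have hcomap : LInf.comap r (translInfty k f) =
      LInf.translation G G k (LInf.comap r f) := by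
    ext g
    exact congrArg f (hr k⁻¹ g).symm
  exact (congrArg m hcomap).trans (apply_of_mem_stabilizer (hK k.2) _)

lemma isClosed_setOf_le_stabilizer (α : G →* (V ≃ₗᵢ[ℝ] V)) {S : Set (WeakDual ℝ V)}
    (hS : IsCompact S) : IsClosed {K : Subgroup G | ∃ ψ ∈ S, K ≤ stabilizer α ψ} := by
  refine isClosed_iff_ultrafilter.2 fun K l hl hmem => ?_
  choose! ψ hψS hψ using fun (K : Subgroup G) (hK : ∃ ψ ∈ S, K ≤ stabilizer α ψ) => hK
  obtain ⟨φ, hφS, hφ⟩ := hS.ultrafilter_le_nhds (l.map ψ) <|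
    le_principal_iff.2 (show ∀ᶠ K in l, ψ K ∈ S from mem_of_superset hmem hψS)
  refine ⟨φ, hφS, fun k hk => mem_stabilizer_iff.2 ?_⟩
  have hlim : Tendsto (fun L => dualAction α k (ψ L)) l (𝓝 (dualAction α k φ)) :=
    ((dualAction α k).continuous.tendsto φ).comp hφ
  refine tendsto_nhds_unique (hlim.congr' ?_) hφ
  filter_upwards [hmem, hl (eventually_mem_iff_mem K k)] with L hL hLk
  exact hψ L hL (hLk.2 hk)

variable (G) in
theorem hasFreeTranslates_of_forall_isURS
    (hG : ∀ X, IsURS G X → (∀ H ∈ X, IsAmenable H) → X = {⊥}) : HasFreeTranslates G := by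
  intro L hL x hx F hF
  by_contra! hfix
  obtain ⟨X, hX, hXsub⟩ := exists_isURS_subset_closure_orbit (stabilizer (LInf.translation G G) x)
  have hclosure : closure {L | ∃ g, L = conjSub g (stabilizer (LInf.translation G G) x)} ⊆
      {K | ∃ m ∈ means G, K ≤ stabilizer (LInf.translation G G) m} ∩ ⋃ s ∈ F, {K | s ∈ K} := by
    refine closure_minimal ?_ ((isClosed_setOf_le_stabilizer _ (isCompact_stateSpace 1)).inter
      (F.finite_toSet.isClosed_biUnion fun s _ => (isClopen_setOf_mem s).1))
    rintro _ ⟨g, rfl⟩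
    rw [← stabilizer_dualAction]
    obtain ⟨s, hs, hsg⟩ := hfix g
    exact ⟨⟨g ⊳ x, hL.subset_means (hL.translate_mem hx.1 g), le_rfl⟩, Set.mem_biUnion hs hsg⟩
  have hbot : (⊥ : Subgroup G) ∈ X := by
    rw [hG X hX fun H hH => ?_]
    · exact Set.mem_singleton _
    · obtain ⟨m, hm, hHm⟩ := (hclosure (hXsub hH)).1
      exact isAmenable_of_le_stabilizer hm hHm
  obtain ⟨s, hs, hs_bot⟩ := Set.mem_iUnion₂.1 (hclosure (hXsub hbot)).2
  exact hF (Subgroup.mem_bot.1 hs_bot ▸ hs)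

end RelativeAmenability

section Reiter

open Filter Topology

variable {Y : Type*}

/-- The probability measures on the set `Y` carried by `A`, as elements of `ℓ¹(Y)`. -/
def probMeasures (A : Set Y) : Set (lp (fun _ : Y => ℝ) 1) :=
  {μ | (∀ y, 0 ≤ μ y) ∧ HasSum (fun y => μ y) 1 ∧ ∀ y ∉ A, μ y = 0}

lemma convex_probMeasures (A : Set Y) : Convex ℝ (probMeasures A) := by
  rintro μ ⟨hμ, hμ_sum, hμA⟩ ν ⟨hν, hν_sum, hνA⟩ a b ha hb hab
  refine ⟨fun y => add_nonneg (mul_nonneg ha (hμ y)) (mul_nonneg hb (hν y)), ?_, fun y hy => ?_⟩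
  · have hsum := (hμ_sum.mul_left a).add (hν_sum.mul_left b)
    rwa [mul_one, mul_one, hab] at hsum
  · change a * μ y + b * ν y = 0
    rw [hμA y hy, hνA y hy, mul_zero, mul_zero, add_zero]

lemma lpDelta_mem_probMeasures {A : Set Y} {y : Y} (hy : y ∈ A) :
    lpDelta ℝ 1 y ∈ probMeasures A := by
  refine ⟨fun z => ?_, ?_, fun z hz => lpDelta_apply_of_ne fun hzy => hz (hzy ▸ hy)⟩
  · by_cases hz : z = y
    · rw [hz, lpDelta_apply_self]
      exact zero_le_one
    · rw [lpDelta_apply_of_ne hz]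
  · have hsum := hasSum_single (f := fun z => lpDelta ℝ 1 y z) y fun z => lpDelta_apply_of_ne
    rwa [lpDelta_apply_self] at hsum

variable [MulAction G Y]

/-- The restriction `g ↦ φ(δ_{g y})` of a functional on `ℓ¹(Y)` to an orbit. -/
def orbitFunction (G : Type*) [Group G] [MulAction G Y] (y : Y) :
    (lp (fun _ : Y => ℝ) 1 →L[ℝ] ℝ) →ₗ[ℝ] LInf G where
  toFun φ := LInf.ofBounded (fun g => φ (lpDelta ℝ 1 (g • y))) ‖φ‖ fun g => by
    simpa only [norm_lpDelta one_pos, mul_one, Real.norm_eq_abs] using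
      φ.le_opNorm (lpDelta ℝ 1 (g • y))
  map_add' _ _ := rfl
  map_smul' _ _ := rfl

lemma orbitFunction_comp_translation (y : Y) (φ : lp (fun _ : Y => ℝ) 1 →L[ℝ] ℝ) (s : G) :
    orbitFunction G y (φ.comp (lpTranslation Y ℝ 1 s : _ →L[ℝ] _)) =
      translInfty s⁻¹ (orbitFunction G y φ) := by
  ext g
  change φ (lpTranslation Y ℝ 1 s (lpDelta ℝ 1 (g • y))) = φ (lpDelta ℝ 1 ((s⁻¹⁻¹ * g) • y))
  rw [lpTranslation_lpDelta, inv_inv, mul_smul]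

/- If no such measure existed, a functional separating the vectors `(s μ - μ)_s` from `0` would
restrict on the orbit of `y` to a function that has mean `0` but is bounded below by some
`u > 0`. -/
theorem IsAmenable.exists_mem_probMeasures_norm_translation_sub_lt (hG : IsAmenable G) (y : Y)
    (S : Finset G) {ε : ℝ} (hε : 0 < ε) :
    ∃ μ ∈ probMeasures (MulAction.orbit G y), ∀ s ∈ S, ‖lpTranslation Y ℝ 1 s μ - μ‖ < ε := by
  classical
  obtain ⟨m, hm_one, hm_nonneg, hm_inv⟩ := hG
  let L (s : S) : lp (fun _ : Y => ℝ) 1 →L[ℝ] lp (fun _ : Y => ℝ) 1 :=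
    lpTranslation Y ℝ 1 (s : G)
  let T : lp (fun _ : Y => ℝ) 1 →L[ℝ] (S → lp (fun _ : Y => ℝ) 1) :=
    ContinuousLinearMap.pi fun s => L s - ContinuousLinearMap.id ℝ _
  by_cases hdisj : Disjoint (Metric.ball 0 ε) (T '' probMeasures (MulAction.orbit G y))
  · obtain ⟨f, u, hfu, huf⟩ := geometric_hahn_banach_open (convex_ball _ ε) Metric.isOpen_ball
      ((convex_probMeasures _).linear_image T.toLinearMap) hdisj
    have hu : 0 < u := by simpa only [map_zero] using hfu 0 (Metric.mem_ball_self hε)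
    let φ (s : S) : lp (fun _ : Y => ℝ) 1 →L[ℝ] ℝ :=
      f.comp (ContinuousLinearMap.single ℝ (fun _ : S => lp (fun _ : Y => ℝ) 1) s)
    have hfT : f.comp T = ∑ s, ((φ s).comp (L s) - φ s) := by
      ext μ
      change f (T μ) = _
      rw [← Finset.univ_sum_single (T μ), map_sum, sum_apply]
      exact Finset.sum_congr rfl fun s _ => map_sub (φ s) (L s μ) μ
    have hmean : m (orbitFunction G y (f.comp T)) = 0 := by
      rw [hfT, map_sum, map_sum]
      refine Finset.sum_eq_zero fun s _ => ?_
      rw [map_sub, map_sub, orbitFunction_comp_translation, hm_inv, sub_self]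
    have hbound : 0 ≤ m (orbitFunction G y (f.comp T) - u • 1) := by
      refine hm_nonneg _ fun g => ?_
      change 0 ≤ f (T (lpDelta ℝ 1 (g • y))) - u * 1
      rw [mul_one, sub_nonneg]
      exact huf _ ⟨_, lpDelta_mem_probMeasures (MulAction.mem_orbit y g), rfl⟩
    rw [map_sub, hmean, map_smul, hm_one, smul_eq_mul, mul_one, zero_sub, neg_nonneg] at hbound
    exact absurd hu hbound.not_gt
  · obtain ⟨_, hball, μ, hμ, rfl⟩ := Set.not_disjoint_iff.1 hdisj
    exact ⟨μ, hμ, fun s hs => (norm_le_pi_norm (T μ) ⟨s, hs⟩).trans_lt (mem_ball_zero_iff.1 hball)⟩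

lemma sq_sqrt_sub_sqrt_le {a b : ℝ} (ha : 0 ≤ a) (hb : 0 ≤ b) : (√a - √b) ^ 2 ≤ |a - b| := by
  have hfactor : a - b = (√a - √b) * (√a + √b) := by
    linear_combination Real.sq_sqrt hb - Real.sq_sqrt ha
  rw [hfactor, abs_mul, ← sq_abs, sq, abs_of_nonneg (by positivity : 0 ≤ √a + √b)]
  gcongr
  exact abs_le.2 ⟨by linarith [Real.sqrt_nonneg a], by linarith [Real.sqrt_nonneg b]⟩

lemma hasSum_abs (μ : lp (fun _ : Y => ℝ) 1) : HasSum (fun y => |μ y|) ‖μ‖ := by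
  simpa using lp.hasSum_norm (p := 1) (by norm_num) μ

lemma hasSum_sq_norm (ξ : ℓ²(Y, ℂ)) : HasSum (fun y => ‖ξ y‖ ^ 2) (‖ξ‖ ^ 2) := by
  simpa using lp.hasSum_norm (p := 2) (by norm_num) ξ

lemma exists_coe_eq_sqrt {A : Set Y} {μ : lp (fun _ : Y => ℝ) 1} (hμ : μ ∈ probMeasures A) :
    ∃ η : ℓ²(Y, ℂ), ‖η‖ = 1 ∧ ∀ y, η y = √(μ y) := by
  have hsq (y : Y) : ‖(√(μ y) : ℂ)‖ ^ 2 = μ y := by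
    rw [Complex.norm_real, Real.norm_eq_abs, sq_abs, Real.sq_sqrt (hμ.1 y)]
  have hsum : HasSum (fun y => ‖(√(μ y) : ℂ)‖ ^ 2) 1 := by
    simpa only [hsq] using hμ.2.1
  let η : ℓ²(Y, ℂ) := ⟨fun y => √(μ y), memℓp_gen <| by
    simpa only [ENNReal.toReal_ofNat, Real.rpow_ofNat] using hsum.summable⟩
  have hη : ‖η‖ ^ 2 = 1 := (hasSum_sq_norm η).unique hsum
  exact ⟨η, (pow_eq_one_iff_of_nonneg (norm_nonneg η) two_ne_zero).1 hη, fun _ => rfl⟩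

lemma sq_norm_permRep_sub_le {A : Set Y} {μ : lp (fun _ : Y => ℝ) 1} (hμ : μ ∈ probMeasures A)
    {η : ℓ²(Y, ℂ)} (hη : ∀ y, η y = √(μ y)) (s : G) :
    ‖(permRep G Y s : Op Y) η - η‖ ^ 2 ≤ ‖lpTranslation Y ℝ 1 s μ - μ‖ := by
  refine hasSum_le (fun y => ?_) (hasSum_sq_norm _) (hasSum_abs _)
  change ‖η (s⁻¹ • y) - η y‖ ^ 2 ≤ |μ (s⁻¹ • y) - μ y|
  rw [hη, hη, ← Complex.ofReal_sub, Complex.norm_real, Real.norm_eq_abs, sq_abs]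
  exact sq_sqrt_sub_sqrt_le (hμ.1 _) (hμ.1 _)

theorem IsAmenable.exists_almostInvariant_vectors (hG : IsAmenable G) (y : Y) :
    ∃ η : Finset G × ℕ → ℓ²(Y, ℂ), (∀ i, ‖η i‖ = 1) ∧
      (∀ i, ∀ z ∉ MulAction.orbit G y, η i z = 0) ∧
      ∀ s, Tendsto (fun i => (permRep G Y s : Op Y) (η i) - η i) atTop (𝓝 0) := by
  choose μ hμ hμ_lt using fun i : Finset G × ℕ =>
    hG.exists_mem_probMeasures_norm_translation_sub_lt y i.1
      (ε := (1 / (i.2 + 1 : ℝ)) ^ 2) (by positivity)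
  choose η hη_norm hη using fun i => exists_coe_eq_sqrt (hμ i)
  refine ⟨η, hη_norm, fun i z hz => ?_, fun s => ?_⟩
  · rw [hη, (hμ i).2.2 z hz, Real.sqrt_zero, Complex.ofReal_zero]
  · have hlim : Tendsto (fun i : Finset G × ℕ => 1 / (i.2 + 1 : ℝ)) atTop (𝓝 0) := by
      rw [← prod_atTop_atTop_eq]
      exact tendsto_one_div_add_atTop_nhds_zero_nat.comp tendsto_snd
    refine squeeze_zero_norm' ?_ hlim
    filter_upwards [eventually_ge_atTop ({s}, 0)] with i hi
    refine (sq_le_sq₀ (norm_nonneg _) (by positivity)).1 ?_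
    exact (sq_norm_permRep_sub_le (hμ i) (hη i) s).trans
      (hμ_lt i s (hi.1 (Finset.mem_singleton_self s))).le

end Reiter

section WeakContainment

open Filter Topology

variable {E F ι : Type*} [NormedAddCommGroup E] [InnerProductSpace ℂ E] [CompleteSpace E]
  [NormedAddCommGroup F] [InnerProductSpace ℂ F] [CompleteSpace F]
  {u : G →* unitary (E →L[ℂ] E)} {v : G →* unitary (F →L[ℂ] F)}
  {l : Filter ι} {η : ι → E} {ξ : F}

lemma inner_unitary_unitary (g h : G) (ξ : E) :
    inner ℂ ((u g : E →L[ℂ] E) ξ) ((u h : E →L[ℂ] E) ξ) =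
      inner ℂ ξ ((u (g⁻¹ * h) : E →L[ℂ] E) ξ) := by
  rw [map_mul, Submonoid.coe_mul, mul_apply_eq_comp, map_inv, ← Unitary.star_eq_inv,
    Unitary.coe_star, ContinuousLinearMap.star_eq_adjoint, ContinuousLinearMap.adjoint_inner_right]

lemma inner_groupAlgebraRep_self (d : MonoidAlgebra ℂ G) (ξ : E) :
    inner ℂ (groupAlgebraRep u d ξ) (groupAlgebraRep u d ξ) =
      ∑ g ∈ d.coeff.support, ∑ h ∈ d.coeff.support,
        d.coeff h * (star (d.coeff g) * inner ℂ ξ ((u (g⁻¹ * h) : E →L[ℂ] E) ξ)) := by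
  rw [groupAlgebraRep_eq_sum, sum_apply, sum_inner]
  simp only [inner_sum, smul_apply, inner_smul_left, inner_smul_right, inner_unitary_unitary]
  rfl

lemma tendsto_norm_groupAlgebraRep
    (hη : ∀ g, Tendsto (fun i => inner ℂ (η i) ((u g : E →L[ℂ] E) (η i))) l
      (𝓝 (inner ℂ ξ ((v g : F →L[ℂ] F) ξ)))) (d : MonoidAlgebra ℂ G) :
    Tendsto (fun i => ‖groupAlgebraRep u d (η i)‖) l (𝓝 ‖groupAlgebraRep v d ξ‖) := by
  simp only [norm_eq_sqrt_re_inner (𝕜 := ℂ), inner_groupAlgebraRep_self]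
  refine ((RCLike.continuous_re.tendsto _).comp ?_).sqrt
  exact tendsto_finsetSum _ fun g _ => tendsto_finsetSum _ fun h _ =>
    ((hη (g⁻¹ * h)).const_mul _).const_mul _

theorem norm_groupAlgebraRep_le_of_tendsto [l.NeBot]
    (hξ : Dense (Set.range fun b => groupAlgebraRep v b ξ))
    (hη : ∀ g, Tendsto (fun i => inner ℂ (η i) ((u g : E →L[ℂ] E) (η i))) l
      (𝓝 (inner ℂ ξ ((v g : F →L[ℂ] F) ξ)))) (c : MonoidAlgebra ℂ G) :
    ‖groupAlgebraRep v c‖ ≤ ‖groupAlgebraRep u c‖ := by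
  refine ContinuousLinearMap.opNorm_le_bound _ (norm_nonneg _) fun ζ => ?_
  refine hξ.induction ?_ (isClosed_le (by fun_prop) (by fun_prop)) ζ
  rintro _ ⟨b, rfl⟩
  have hcb := tendsto_norm_groupAlgebraRep hη (c * b)
  simp only [map_mul, mul_apply_eq_comp] at hcb
  exact le_of_tendsto_of_tendsto' hcb ((tendsto_norm_groupAlgebraRep hη b).const_mul _) fun i =>
    (groupAlgebraRep u c).le_opNorm _

end WeakContainment

section QuasiregularRepresentation

open Filter Topology

variable {H : Subgroup G}

lemma dense_range_groupAlgebraRep_basisVec {Y : Type*} [MulAction G Y]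
    [MulAction.IsPretransitive G Y] (y : Y) :
    Dense (Set.range fun b => groupAlgebraRep (permRep G Y) b (basisVec y)) := by
  classical
  choose g hg using MulAction.exists_smul_eq G y
  intro ξ
  refine mem_closure_of_tendsto (lp.hasSum_single (by norm_num) ξ) (.of_forall fun A => ?_)
  refine ⟨∑ z ∈ A, MonoidAlgebra.single (g z) (ξ z), ?_⟩
  simp only [map_sum, groupAlgebraRep_single, sum_apply, smul_apply, permRep_basisVec, hg]
  refine Finset.sum_congr rfl fun z _ => ?_
  rw [basisVec, lpDelta, ← lp.single_smul, smul_eq_mul, mul_one]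

lemma inner_permRep_eq_zero_of_notMem {s : G} (hs : s ∉ H) {η : ℓ²(G, ℂ)}
    (hη : ∀ g ∉ H, η g = 0) : inner ℂ η ((permRep G G s : Op G) η) = 0 := by
  refine (lp.inner_eq_tsum _ _).trans <| (tsum_congr fun g => ?_).trans tsum_zero
  rw [permRep_apply, smul_eq_mul]
  by_cases hg : g ∈ H
  · rw [hη (s⁻¹ * g) (by rwa [H.mul_mem_cancel_right hg, inv_mem_iff]), inner_zero_right]
  · rw [hη g hg, inner_zero_left]

theorem IsAmenable.exists_tendsto_inner_permRep (hH : IsAmenable H) :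
    ∃ η : Finset H × ℕ → ℓ²(G, ℂ), ∀ s,
      Tendsto (fun i => inner ℂ (η i) ((permRep G G s : Op G) (η i))) atTop
        (𝓝 (inner ℂ (basisVec ((1 : G) : G ⧸ H))
          ((permRep G (G ⧸ H) s : Op (G ⧸ H)) (basisVec ((1 : G) : G ⧸ H))))) := by
  obtain ⟨η, hη_norm, hη_orbit, hη⟩ := hH.exists_almostInvariant_vectors (Y := G) 1
  refine ⟨η, fun s => ?_⟩
  rw [permRep_basisVec, inner_basisVec, MulAction.Quotient.smul_coe, smul_eq_mul, mul_one]
  by_cases hs : s ∈ H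
  · have hs_eq : (s : G ⧸ H) = (1 : G) := by
      rwa [QuotientGroup.eq, mul_one, inv_mem_iff]
    rw [hs_eq, basisVec, lpDelta_apply_self, ← tendsto_sub_nhds_zero_iff]
    refine squeeze_zero_norm (fun i => ?_) (tendsto_zero_iff_norm_tendsto_zero.1 (hη ⟨s, hs⟩))
    have hone : inner ℂ (η i) (η i) = 1 := by
      rw [inner_self_eq_norm_sq_to_K, hη_norm, RCLike.ofReal_one, one_pow]
    rw [← hone, ← inner_sub_right]
    refine (norm_inner_le_norm _ _).trans_eq ?_
    rw [hη_norm, one_mul]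
    rfl
  · have hs_ne : ((1 : G) : G ⧸ H) ≠ s := by
      rwa [Ne, QuotientGroup.eq, inv_one, one_mul]
    rw [basisVec, lpDelta_apply_of_ne hs_ne]
    have hη_zero (i) : ∀ g ∉ H, η i g = 0 := fun g hg => hη_orbit i g fun ⟨h, hh⟩ =>
      hg (hh ▸ H.mul_mem h.2 H.one_mem)
    exact tendsto_const_nhds.congr fun i => (inner_permRep_eq_zero_of_notMem hs (hη_zero i)).symm

theorem IsAmenable.norm_groupAlgebraRep_quotient_le (hH : IsAmenable H) (c : MonoidAlgebra ℂ G) :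
    ‖groupAlgebraRep (permRep G (G ⧸ H)) c‖ ≤ ‖groupAlgebraRep (permRep G G) c‖ := by
  classical
  obtain ⟨η, hη⟩ := hH.exists_tendsto_inner_permRep
  exact norm_groupAlgebraRep_le_of_tendsto (dense_range_groupAlgebraRep_basisVec _) hη c

end QuasiregularRepresentation

section TransferOfStates

variable {A B : Type*} [CStarAlgebra A] [CStarAlgebra B] {u : G →* unitary A} {v : G →* unitary B}

theorem exists_mem_stateSpace_forall_groupAlgebraRep
    (huv : ∀ c, ‖groupAlgebraRep v c‖ ≤ ‖groupAlgebraRep u c‖) {ψ : WeakDual ℝ B}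
    (hψ : ψ ∈ stateSpace 1) :
    ∃ ρ ∈ stateSpace (1 : A), ∀ c, ρ (groupAlgebraRep u c) = ψ (groupAlgebraRep v c) := by
  let φ : MonoidAlgebra ℂ G →ₗ[ℝ] ℝ :=
    (ψ : B →ₗ[ℝ] ℝ) ∘ₗ (groupAlgebraRep v).toLinearMap.restrictScalars ℝ
  have hφ_one : φ 1 = 1 := (congrArg ψ (map_one (groupAlgebraRep v))).trans hψ.1
  let W : Submodule ℝ A := φ.ker.map ((groupAlgebraRep u).toLinearMap.restrictScalars ℝ)
  obtain ⟨ρ, hρ, hρW⟩ := exists_mem_stateSpace_of_forall_le (IsStarProjection.one A).norm_le W <| by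
    rintro _ ⟨c, hc, rfl⟩
    calc (1 : ℝ) = φ (1 - c) := by rw [map_sub, hφ_one, LinearMap.mem_ker.1 hc, sub_zero]
      _ ≤ ‖groupAlgebraRep u (1 - c)‖ := (hψ.2 _).trans (huv _)
      _ = ‖1 - groupAlgebraRep u c‖ := by rw [map_sub, map_one]
  refine ⟨ρ, hρ, fun c => ?_⟩
  have hφ : φ (c - φ c • 1) = 0 := by
    rw [map_sub, map_smul, hφ_one, smul_eq_mul, mul_one, sub_self]
  have hρφ := hρW _ ⟨_, hφ, rfl⟩
  rw [map_sub, map_smul, map_sub, map_smul] at hρφ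
  change ρ (groupAlgebraRep u c) - φ c * ρ (groupAlgebraRep u 1) = 0 at hρφ
  rwa [map_one, hρ.1, mul_one, sub_eq_zero] at hρφ

end TransferOfStates

section FreenessFromSimplicity

lemma convolve_conjAction_smul_eq_zero {A : Type*} [CStarAlgebra A] {u : G →* unitary A}
    {ρ : WeakDual ℝ A} (hρ : ∀ s ≠ 1, ∀ z : ℂ, ρ (z • (u s : A)) = 0) (m : WeakDual ℝ (LInf G))
    {s : G} (hs : s ≠ 1) (z : ℂ) : convolve (conjAction u) ρ m (z • (u s : A)) = 0 := by
  have hzero : poisson (conjAction u) ρ (z • (u s : A)) = 0 := by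
    ext g
    refine (congrArg ρ (conjAction_smul_coe g⁻¹ s z)).trans (hρ _ ?_ z)
    rwa [Ne, conj_eq_one_iff]
  rw [convolve_apply, hzero, map_zero]

theorem IsCstarSimple.exists_mem_stateSpace_quotient (hG : IsCstarSimple G) {H : Subgroup G}
    (hH : IsAmenable H) : ∃ ρ ∈ stateSpace (1 : Op (G ⧸ H)), ∀ s ≠ 1, ∀ z : ℂ,
      ρ (z • (permRep G (G ⧸ H) s : Op (G ⧸ H))) = 0 := by
  have : Nontrivial ℓ²(G ⧸ H, ℂ) :=
    ⟨basisVec ((1 : G) : G ⧸ H), 0, norm_ne_zero_iff.1 <| (norm_basisVec _).trans_ne one_ne_zero⟩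
  have hnorm (c : MonoidAlgebra ℂ G) := norm_groupAlgebraRep_eq_of_isSimple
    (isCstarSimple_iff.1 hG) hH.norm_groupAlgebraRep_quotient_le c
  obtain ⟨ρ, hρ, hρ_rep⟩ := exists_mem_stateSpace_forall_groupAlgebraRep (fun c => (hnorm c).ge)
    (vectorState_mem_stateSpace (norm_basisVec (1 : G)))
  refine ⟨ρ, hρ, fun s hs z => ?_⟩
  have hρs := hρ_rep (.single s z)
  rw [groupAlgebraRep_single, groupAlgebraRep_single] at hρs
  exact hρs.trans (vectorState_basisVec_one_smul_permRep hs z)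

section OrbitPoisson

variable {V : Type*} [NormedAddCommGroup V] [NormedSpace ℝ V] {α : G →* (V ≃ₗᵢ[ℝ] V)}
  {ψ : WeakDual ℝ V}

variable (α ψ) in
/-- The Poisson map of `ψ`, as a map to functions on the orbit `G ⧸ stabilizer α ψ` of `ψ`. -/
def orbitPoisson : V →L[ℝ] LInf (G ⧸ stabilizer α ψ) :=
  (LInf.comap Quotient.out).comp (poisson α ψ)

lemma transpose_orbitPoisson (κ : WeakDual ℝ (LInf (G ⧸ stabilizer α ψ))) :
    transpose (orbitPoisson α ψ) κ = convolve α ψ (transpose (LInf.comap Quotient.out) κ) := rfl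

lemma orbitPoisson_coe (v : V) (g : G) :
    orbitPoisson α ψ v (g : G ⧸ stabilizer α ψ) = dualAction α g ψ v := by
  obtain ⟨k, hk⟩ := QuotientGroup.mk_out_eq_mul (stabilizer α ψ) g
  rw [orbitPoisson, ContinuousLinearMap.comp_apply, LInf.comap_apply, poisson_apply, hk,
    dualAction_mul, mem_stabilizer_iff.1 k.2]

lemma orbitPoisson_map (g : G) (v : V) :
    orbitPoisson α ψ (α g v) = LInf.translation G (G ⧸ stabilizer α ψ) g (orbitPoisson α ψ v) := by
  refine lp.ext <| funext fun y => ?_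
  obtain ⟨h, rfl⟩ := QuotientGroup.mk_surjective y
  rw [lpTranslation_apply, MulAction.Quotient.smul_coe, orbitPoisson_coe, orbitPoisson_coe,
    smul_eq_mul, dualAction_mul, dualAction_apply g⁻¹, inv_inv]

lemma coe_mem_fixedBy_iff {g t : G} :
    (g : G ⧸ stabilizer α ψ) ∈ MulAction.fixedBy (G ⧸ stabilizer α ψ) t ↔
      dualAction α t (dualAction α g ψ) = dualAction α g ψ := by
  rw [← mem_stabilizer_iff (ψ := dualAction α g ψ), stabilizer_dualAction, mem_conjSub,
    MulAction.mem_fixedBy, eq_comm, MulAction.Quotient.smul_coe, QuotientGroup.eq, smul_eq_mul,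
    mul_assoc]

end OrbitPoisson

namespace IsMinimalLeftIdeal

variable {L : Set (WeakDual ℝ (LInf G))} {x : WeakDual ℝ (LInf G)}

lemma transpose_orbitPoisson_mem (hL : IsMinimalLeftIdeal L) (hx : x ∈ L)
    {κ : WeakDual ℝ (LInf (G ⧸ stabilizer (LInf.translation G G) x))} (hκ : κ ∈ means _) :
    transpose (orbitPoisson (LInf.translation G G) x) κ ∈ L :=
  transpose_orbitPoisson κ ▸ hL.convolve_mem _ (transpose_comap_mem_means _ hκ) x hx

lemma transpose_orbitPoisson_convolve (hL : IsMinimalLeftIdeal L) (hx : x ∈ L)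
    {κ : WeakDual ℝ (LInf (G ⧸ stabilizer (LInf.translation G G) x))} (hκ : κ ∈ means _) :
    transpose (orbitPoisson (LInf.translation G G) x)
      (convolve (LInf.translation G _) κ x) = x := by
  rw [← convolve_transpose orbitPoisson_map]
  exact hL.convolve_eq_left hx (hL.transpose_orbitPoisson_mem hx hκ)

theorem apply_indicator_fixedBy_eq_zero (hL : IsMinimalLeftIdeal L) (hx : x ∈ L.extremePoints ℝ)
    {κ : WeakDual ℝ (LInf (G ⧸ stabilizer (LInf.translation G G) x))} (hκ : κ ∈ means _)
    {t : G} (ht : t ⊳ x ≠ x) :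
    convolve (LInf.translation G _) κ x (LInf.indicator (MulAction.fixedBy _ t)) = 0 := by
  have hν := convolve_mem_stateSpace translation_one hκ (hL.subset_means hx.1)
  have hνx := hL.transpose_orbitPoisson_convolve hx.1 hκ
  obtain ⟨f, hf⟩ := DFunLike.ne_iff.1 ht
  refine apply_indicator_eq_zero_of_eq_zero (v := LInf.translation G G t⁻¹ f - f)
    (fun κ hκ => hL.transpose_orbitPoisson_mem hx.1 hκ) hν (hνx.symm ▸ hx) ?_ fun y hy => ?_
  · refine (DFunLike.congr_fun hνx _).trans_ne ?_
    rw [map_sub]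
    exact sub_ne_zero.2 hf
  · obtain ⟨g, rfl⟩ := QuotientGroup.mk_surjective y
    rw [orbitPoisson_coe, map_sub, sub_eq_zero]
    exact DFunLike.congr_fun (coe_mem_fixedBy_iff.1 hy) f

/- The state on `B(ℓ²(G ⧸ G_x))` induced by `x` is concentrated on the fixed points of `s`, hence
sends `λ_s` to `1`. -/
theorem eq_one_of_forall_fixedBy (hL : IsMinimalLeftIdeal L) (hG : IsCstarSimple G)
    (hx : x ∈ L.extremePoints ℝ) {F : Finset G}
    (hF : ∀ g : G, (∀ t ∈ F, t ⊳ g ⊳ x = g ⊳ x → t ⊳ x = x) →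
      ∀ t ∈ F, t ⊳ x = x → t ⊳ g ⊳ x = g ⊳ x)
    {s : G} (hs : s ∈ F) (hsx : s ⊳ x = x) : s = 1 := by
  classical
  by_contra hs_ne
  have hxm := hL.subset_means hx.1
  obtain ⟨ρ, hρ, hρ_zero⟩ :=
    hG.exists_mem_stateSpace_quotient (isAmenable_of_le_stabilizer hxm le_rfl)
  have hν := transpose_mulOp_mem_means hρ
  have hconv := convolve_mem_stateSpace (conjAction_one (u := permRep G _)) hρ hxm
  have hnull : transpose mulOp (convolve (conjAction (permRep G _)) ρ x)
      (LInf.indicator (MulAction.fixedBy _ s)ᶜ) = 0 := by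
    rw [← convolve_transpose mulOp_translation]
    refine apply_indicator_eq_zero_of_subset_biUnion (T := {t ∈ F | t ⊳ x ≠ x})
      (A := MulAction.fixedBy _) (convolve_mem_stateSpace translation_one hν hxm) (fun y hy => ?_)
      fun t ht => hL.apply_indicator_fixedBy_eq_zero hx hν (Finset.mem_filter.1 ht).2
    obtain ⟨g, rfl⟩ := QuotientGroup.mk_surjective y
    by_contra! hcover
    refine hy (coe_mem_fixedBy_iff.2 (hF g (fun t ht htg => ?_) s hs hsx))
    by_contra htx
    exact hcover (Set.mem_biUnion (Finset.mem_filter.2 ⟨ht, htx⟩) (coe_mem_fixedBy_iff.2 htg))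
  have hone := apply_permRep_eq_one hconv hnull
  have hzero := convolve_conjAction_smul_eq_zero hρ_zero x hs_ne 1
  rw [one_smul] at hzero
  exact zero_ne_one (hzero.symm.trans hone)

end IsMinimalLeftIdeal

theorem IsCstarSimple.hasFreeTranslates (hG : IsCstarSimple G) : HasFreeTranslates G := by
  classical
  intro L hL x hx F hF
  by_contra! hfix
  obtain ⟨g₀, -, hg₀⟩ := exists_minimalFor_of_wellFoundedLT (fun _ : G => True)
    (fun g => {t ∈ F | t ⊳ g ⊳ x = g ⊳ x}) ⟨1, trivial⟩
  obtain ⟨s, hs, hsx⟩ := hfix g₀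
  refine hF ((hL.eq_one_of_forall_fixedBy hG (hL.translate_mem_extremePoints hx g₀)
    (fun g hg t ht htx => ?_) hs hsx) ▸ hs)
  rw [← dualAction_mul g] at hg ⊢
  have hsub := hg₀ (j := g * g₀) trivial <| Finset.monotone_filter_right _ fun t ht => hg t ht
  exact (Finset.mem_filter.1 (hsub (Finset.mem_filter.2 ⟨ht, htx⟩))).2

end FreenessFromSimplicity

section TrivialityOfAmenableURS

variable {H : Subgroup G} {X : Set (Subgroup G)}

lemma vectorState_basisVec_permRep_quotient (s : G) :
    vectorState (basisVec ((1 : G) : G ⧸ H)) (permRep G (G ⧸ H) s : Op (G ⧸ H)) =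
      Set.indicator (H : Set G) 1 s := by
  rw [vectorState_apply, permRep_basisVec, inner_basisVec, MulAction.Quotient.smul_coe,
    smul_eq_mul, mul_one]
  by_cases hs : s ∈ H
  · rw [show (s : G ⧸ H) = (1 : G) from QuotientGroup.eq.2 (by simpa using hs), lpDelta_apply_self,
      Set.indicator_of_mem (SetLike.mem_coe.2 hs), Pi.one_apply, Complex.one_re]
  · rw [lpDelta_apply_of_ne fun h => hs (by simpa using QuotientGroup.eq.1 h), Complex.zero_re,
      Set.indicator_of_notMem (mt SetLike.mem_coe.1 hs)]

theorem IsAmenable.exists_mem_stateSpace_permRep (hH : IsAmenable H) :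
    ∃ ρ ∈ stateSpace (1 : Op G), ∀ s : G,
      ρ (permRep G G s : Op G) = Set.indicator (H : Set G) 1 s := by
  obtain ⟨ρ, hρ, hρ_rep⟩ := exists_mem_stateSpace_forall_groupAlgebraRep
    hH.norm_groupAlgebraRep_quotient_le
    (vectorState_mem_stateSpace (norm_basisVec ((1 : G) : G ⧸ H)))
  refine ⟨ρ, hρ, fun s => ?_⟩
  have hρs := hρ_rep (.single s 1)
  rw [groupAlgebraRep_single, groupAlgebraRep_single, one_smul, one_smul] at hρs
  exact hρs.trans (vectorState_basisVec_permRep_quotient s)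

theorem HasFreeTranslates.exists_forall_notMem_conjSub (hG : HasFreeTranslates G)
    (hH : IsAmenable H) {F : Finset G} (hF : 1 ∉ F) : ∃ g, ∀ s ∈ F, s ∉ conjSub g H := by
  by_contra! hmeet
  obtain ⟨ρ, hρ, hρH⟩ := hH.exists_mem_stateSpace_permRep
  obtain ⟨n, hn, hnρ⟩ := hG.exists_convolve_eq_zero hρ
  have hpoisson (s g : G) : poisson (conjAction (permRep G G)) ρ (permRep G G s : Op G) g =
      Set.indicator (conjSub g H : Set G) 1 s := by
    have hconj := conjAction_smul_coe (u := permRep G G) g⁻¹ s 1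
    rw [one_smul, one_smul, inv_inv] at hconj
    exact (congrArg ρ hconj).trans <| (hρH _).trans <|
      Set.indicator_eq_indicator mem_conjSub.symm rfl
  have hle : n 1 ≤ n (∑ s ∈ F, poisson (conjAction (permRep G G)) ρ (permRep G G s : Op G)) := by
    refine apply_mono_of_mem_means hn fun g => ?_
    obtain ⟨s, hs, hsg⟩ := hmeet g
    rw [lp.coeFn_sum, Finset.sum_apply]
    simp only [hpoisson]
    calc (1 : ℝ) = Set.indicator (conjSub g H : Set G) 1 s := (Set.indicator_of_mem hsg 1).symm
      _ ≤ ∑ s ∈ F, Set.indicator (conjSub g H : Set G) 1 s :=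
        Finset.single_le_sum (fun t _ => Set.indicator_nonneg (fun _ _ => zero_le_one) t) hs
  rw [hn.1, map_sum, Finset.sum_eq_zero fun s hs => ?_] at hle
  · exact zero_lt_one.not_ge hle
  · have hzero := hnρ s (ne_of_mem_of_not_mem hs hF) 1
    rwa [one_smul] at hzero

theorem HasFreeTranslates.bot_mem_of_isURS (hG : HasFreeTranslates G) (hX : IsURS G X)
    (hXa : ∀ H ∈ X, IsAmenable H) : ⊥ ∈ X := by
  obtain ⟨⟨H, hH⟩, hXclosed, hXinv, -⟩ := hX
  obtain ⟨K, hK, hK_bot⟩ := hXclosed.isCompact.inter_iInter_nonempty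
    (fun s : {s : G // s ≠ 1} => {K : Subgroup G | (s : G) ∈ K}ᶜ)
    (fun s => (isClopen_setOf_mem (s : G)).compl.1) fun F => by
      obtain ⟨g, hg⟩ := hG.exists_forall_notMem_conjSub (hXa H hH)
        (F := F.map (Function.Embedding.subtype _)) (by simp)
      exact ⟨conjSub g H, hXinv g H hH,
        Set.mem_iInter₂.2 fun s hs => hg s (Finset.mem_map_of_mem _ hs)⟩
  convert hK
  refine ((Subgroup.eq_bot_iff_forall K).2 fun s hs => ?_).symm
  by_contra hs_ne
  exact Set.mem_iInter.1 hK_bot ⟨s, hs_ne⟩ hs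

lemma IsURS.eq_singleton_bot (hX : IsURS G X) (hbot : ⊥ ∈ X) : X = {⊥} := by
  refine Set.eq_singleton_iff_unique_mem.2 ⟨hbot, fun K hK => ?_⟩
  refine (Subgroup.eq_bot_iff_forall K).2 fun s hs => ?_
  obtain ⟨_, hsg, g, rfl⟩ :=
    mem_closure_iff.1 (hX.2.2.2 ⊥ hbot K hK) _ (isClopen_setOf_mem s).2 hs
  rwa [Set.mem_ofPred_eq, conjSub, Subgroup.map_bot, Subgroup.mem_bot] at hsg

end TrivialityOfAmenableURS

/-- **Theorem (Kennedy).** A discrete group is C*-simple if and only if it has no non-trivial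
amenable uniformly recurrent subgroup. -/
theorem cstarSimple_iff_no_nontrivial_amenable_urs (G : Type u) [Group G] :
    IsCstarSimple G ↔
      ¬ ∃ X : Set (Subgroup G), IsURS G X ∧ (∀ H ∈ X, IsAmenable H) ∧
        X ≠ {(⊥ : Subgroup G)} := by
  constructor
  · rintro hG ⟨X, hX, hXa, hne⟩
    exact hne (hX.eq_singleton_bot (hG.hasFreeTranslates.bot_mem_of_isURS hX hXa))
  · intro hG
    refine (hasFreeTranslates_of_forall_isURS G fun X hX hXa => ?_).isCstarSimple
    by_contra hne
    exact hG ⟨X, hX, hXa, hne⟩
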